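/- arXiv:0909.4915 — 10 statements merged into one kernel-verified Lean document; each statement's English description precedes it below -/
import Mathlib

section
/- Let B ⊂ ℝ^d be a convex compact set, let n ≥ 1, and let f_1, …, f_n : B → ℝ^d be continuous maps. Set l = ⌊(n+d)/(d+1)⌋. Suppose that for every x ∈ B at most l−1 of the points f_1(x), …, f_n(x) lie outside B. Then there exists x ∈ B such that every closed halfspace containing x contains at least l of the points f_1(x), …, f_n(x). -/
open scoped InnerProductSpace

section ScarfPart
open Finset

/-- A set is dominant if every point is below all of it in at least one order. -/
def ScDom {X I : Type*} (u : I → X → ℕ) (τ : Finset X) : Prop :=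
  ∀ y, ∃ i, ∀ x ∈ τ, u i y ≤ u i x

lemma ScDom.mono {X I : Type*} {u : I → X → ℕ} {τ ρ : Finset X} (h : ScDom u ρ) (hs : τ ⊆ ρ) :
    ScDom u τ := fun y => by
  obtain ⟨i, hi⟩ := h y
  exact ⟨i, fun x hx => hi x (hs hx)⟩

/-- Structure of a door. -/
lemma sc_argmin {X I : Type*} [Fintype I] [DecidableEq X] [DecidableEq I]
    {u : I → X → ℕ} (hu : ∀ i, Function.Injective (u i)) {τ : Finset X}
    (hτ : τ.Nonempty) (hd : ScDom u τ) :
    ∃ a : I → X, (∀ i, a i ∈ τ) ∧ (∀ i, ∀ x ∈ τ, u i (a i) ≤ u i x) ∧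
      (∀ x ∈ τ, ∃ i, a i = x) := by
  choose a ha hmin using fun i => τ.exists_min_image (u i) hτ
  refine ⟨a, ha, hmin, fun x hx => ?_⟩
  obtain ⟨i, hi⟩ := hd x
  exact ⟨i, hu i (le_antisymm (hmin i x hx) (hi _ (ha i)))⟩

lemma sc_pair {X I : Type*} [Fintype I] [DecidableEq X] [DecidableEq I]
    {τ : Finset X} {a : I → X} (ha : ∀ i, a i ∈ τ) (hs : ∀ x ∈ τ, ∃ i, a i = x)
    (hc : τ.card + 1 = Fintype.card I) :
    ∃ i j, i ≠ j ∧ a i = a j ∧ ∀ k l, k ≠ l → a k = a l → (k = i ∧ l = j) ∨ (k = j ∧ l = i) := by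
  have himg : univ.image a = τ := by
    ext x
    simp only [mem_image, mem_univ, true_and]
    exact ⟨fun ⟨i, h⟩ => h ▸ ha i, hs x⟩
  obtain ⟨i, -, j, -, hij, haij⟩ := exists_ne_map_eq_of_card_lt_of_maps_to
    (s := (univ : Finset I)) (t := τ) (f := a) (by rw [card_univ]; omega) (fun i _ => ha i)
  have himg2 : (univ.erase j).image a = τ := by
    ext x
    simp only [mem_image, mem_erase, mem_univ, and_true]
    constructor
    · rintro ⟨k, -, rfl⟩; exact ha k
    · intro hx
      obtain ⟨k, hk⟩ := hs x hx
      by_cases hkj : k = j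
      · exact ⟨i, hij, by rw [haij, ← hkj, hk]⟩
      · exact ⟨k, hkj, hk⟩
  have hinj : Set.InjOn a (univ.erase j : Finset I) := by
    rw [← card_image_iff, himg2, card_erase_of_mem (mem_univ _), card_univ]; omega
  refine ⟨i, j, hij, haij, fun k l hkl hakl => ?_⟩
  by_cases hk : k = j
  · right
    refine ⟨hk, ?_⟩
    apply hinj (by simp [← hk, hkl.symm]) (by simp [hij])
    rw [← hakl, hk, haij]
  · by_cases hl : l = j
    · left
      refine ⟨?_, hl⟩
      apply hinj (by simp [hk]) (by simp [hij])
      rw [hakl, hl, haij]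
    · exact absurd (hinj (by simp [hk]) (by simp [hl]) hakl) hkl

/-- Rooms through a door. `Y k z` means `z` beats the minimum of all orders but `k`. -/
lemma sc_room_iff {X I : Type*} [Fintype I] [DecidableEq X] [DecidableEq I]
    {u : I → X → ℕ} (hu : ∀ i, Function.Injective (u i)) {τ : Finset X}
    (hd : ScDom u τ) (hc : τ.card + 1 = Fintype.card I)
    {a : I → X} (ha : ∀ i, a i ∈ τ) (hmin : ∀ i, ∀ x ∈ τ, u i (a i) ≤ u i x)
    (hs : ∀ x ∈ τ, ∃ i, a i = x) {i j : I} (hij : i ≠ j) (haij : a i = a j)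
    (hun : ∀ k l, k ≠ l → a k = a l → (k = i ∧ l = j) ∨ (k = j ∧ l = i)) (z : X) :
    (z ∉ τ ∧ ScDom u (insert z τ)) ↔
      ∃ k, (k = i ∨ k = j) ∧ (∀ p, p ≠ k → u p (a p) < u p z) ∧
        ∀ y, (∀ p, p ≠ k → u p (a p) < u p y) → u k y ≤ u k z := by
  constructor
  · rintro ⟨hz, hD⟩
    obtain ⟨b, hb, hbmin, hbs⟩ := sc_argmin hu (insert_nonempty z τ) hD
    have hbinj : Function.Injective b := by
      have himg : univ.image b = insert z τ := by
        ext x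
        simp only [Finset.mem_image, mem_univ, true_and]
        exact ⟨fun ⟨i, h⟩ => h ▸ hb i, hbs x⟩
      rw [← Set.injOn_univ, ← coe_univ, ← card_image_iff, himg, card_insert_of_notMem hz, hc,
        card_univ]
    obtain ⟨k, hk⟩ := hbs z (mem_insert_self _ _)
    have hne : ∀ p, p ≠ k → b p = a p := by
      intro p hp
      have h1 : b p ∈ τ := by
        rcases mem_insert.1 (hb p) with h | h
        · exact absurd (hbinj (h.trans hk.symm)) hp
        · exact h
      exact hu p (le_antisymm (hbmin p _ (mem_insert_of_mem (ha p))) (hmin p _ h1))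
    have hlt : ∀ p, p ≠ k → u p (a p) < u p z := by
      intro p hp
      refine lt_of_le_of_ne ?_ ?_
      · rw [← hne p hp]; exact hbmin p _ (mem_insert_self _ _)
      · intro h
        exact hz (hu p h ▸ ha p)
    refine ⟨k, ?_, hlt, ?_⟩
    · by_contra! hcon
      exact hij (hbinj (by rw [hne i hcon.1.symm, hne j hcon.2.symm, haij]))
    · intro y hy
      obtain ⟨p, hp⟩ := hD y
      by_cases hpk : p = k
      · subst hpk; exact hp z (mem_insert_self _ _)
      · exact absurd (hp _ (mem_insert_of_mem (ha p))) (not_le.2 (hy p hpk))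
  · rintro ⟨k, hk, hlt, hmax⟩
    obtain ⟨k', hkk', hak⟩ : ∃ k', k' ≠ k ∧ a k' = a k := by
      rcases hk with rfl | rfl
      · exact ⟨j, hij.symm, haij.symm⟩
      · exact ⟨i, hij, haij⟩
    have hz : z ∉ τ := by
      intro hz
      obtain ⟨p, hp⟩ := hs z hz
      by_cases hpk : p = k
      · have := hlt k' hkk'
        rw [hak, ← hpk, hp] at this
        exact lt_irrefl _ this
      · have := hlt p hpk
        rw [hp] at this
        exact lt_irrefl _ this
    refine ⟨hz, fun y => ?_⟩
    by_contra! hcon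
    have hy : ∀ p, p ≠ k → u p (a p) < u p y := by
      intro p hp
      obtain ⟨x, hx, hxy⟩ := hcon p
      rcases mem_insert.1 hx with rfl | hx
      · exact (hlt p hp).trans hxy
      · exact (hmin p x hx).trans_lt hxy
    obtain ⟨p, hp⟩ := hd y
    have hpk : p = k := by
      by_contra hpk
      exact absurd (hp _ (ha p)) (not_le.2 (hy p hpk))
    subst hpk
    obtain ⟨x, hx, hxy⟩ := hcon p
    rcases mem_insert.1 hx with rfl | hx
    · exact absurd (hmax y hy) (not_le.2 hxy)
    · exact absurd (hp x hx) (not_le.2 hxy)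

lemma sc_even {X I : Type*} [Fintype I] [DecidableEq X] [DecidableEq I]
    (c : X → I) (i0 : I) (ρ : Finset X) (hρ : ρ.card = Fintype.card I)
    (hne : ρ.image c ≠ univ) :
    Even (ρ.filter fun z => (ρ.erase z).image c = univ.erase i0).card := by
  by_cases hex : ∃ z ∈ ρ, (ρ.erase z).image c = univ.erase i0
  swap
  · rw [filter_false_of_mem (fun z hz h => hex ⟨z, hz, h⟩)]; simp
  obtain ⟨z, hz, himg⟩ := hex
  have hinj : Set.InjOn c (ρ.erase z : Finset X) := by
    rw [← card_image_iff, himg, card_erase_of_mem (mem_univ _), card_erase_of_mem hz, hρ,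
      card_univ]
  have hcz : c z ≠ i0 := by
    intro h
    apply hne
    rw [← insert_erase hz, image_insert, himg, h, insert_erase (mem_univ _)]
  have : c z ∈ (ρ.erase z).image c := by rw [himg]; simp [hcz]
  obtain ⟨w, hw, hcw⟩ := mem_image.1 this
  have hwz : w ≠ z := (mem_erase.1 hw).1
  have hwρ : w ∈ ρ := (mem_erase.1 hw).2
  have : (ρ.filter fun z => (ρ.erase z).image c = univ.erase i0) = {z, w} := by
    ext x
    simp only [mem_filter, mem_insert, mem_singleton]
    constructor
    · rintro ⟨hx, hxi⟩
      by_contra! hcon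
      have hxinj : Set.InjOn c (ρ.erase x : Finset X) := by
        rw [← card_image_iff, hxi, card_erase_of_mem (mem_univ _), card_erase_of_mem hx, hρ,
          card_univ]
      exact hwz (hxinj (by simp [hwρ, hcon.2.symm]) (by simp [hz, hcon.1.symm]) hcw)
    · rintro (rfl | rfl)
      · exact ⟨hz, himg⟩
      · refine ⟨hwρ, ?_⟩
        rw [← himg]
        ext i
        simp only [mem_image, mem_erase]
        constructor
        · rintro ⟨y, ⟨hy1, hy2⟩, rfl⟩
          by_cases h : y = z
          · exact ⟨x, ⟨hwz, hwρ⟩, by rw [h, hcw]⟩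
          · exact ⟨y, ⟨h, hy2⟩, rfl⟩
        · rintro ⟨y, ⟨hy1, hy2⟩, rfl⟩
          by_cases h : y = x
          · exact ⟨z, ⟨hwz.symm, hz⟩, by rw [h, hcw]⟩
          · exact ⟨y, ⟨h, hy2⟩, rfl⟩
  rw [this, card_pair hwz.symm]
  exact even_two

/-- The Scarf lemma. -/
lemma scarf {T I : Type*} [Fintype T] [Fintype I] [DecidableEq T] [DecidableEq I] [Nontrivial I]
    (u : I → T ⊕ I → ℕ) (hu : ∀ i, Function.Injective (u i))
    (h0 : ∀ i t, u i (Sum.inr i) < u i (Sum.inl t))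
    (h0' : ∀ i j, u i (Sum.inr i) ≤ u i (Sum.inr j))
    (h1 : ∀ i j t, j ≠ i → u i (Sum.inl t) < u i (Sum.inr j))
    (hT : Nonempty T)
    (c : T ⊕ I → I) (hcs : ∀ i, c (Sum.inr i) = i) :
    ∃ ρ : Finset (T ⊕ I), ρ.card = Fintype.card I ∧ ScDom u ρ ∧ ρ.image c = univ := by
  classical
  obtain ⟨i0⟩ : Nonempty I := inferInstance
  by_contra! hcon
  let m := Fintype.card I
  have hm : 1 < m := Fintype.one_lt_card
  let D : Finset (Finset (T ⊕ I)) := univ.filter fun τ =>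
    τ.card + 1 = m ∧ ScDom u τ ∧ τ.image c = univ.erase i0
  let R : Finset (Finset (T ⊕ I)) := univ.filter fun ρ => ρ.card = m ∧ ScDom u ρ
  let rooms : Finset (T ⊕ I) → Finset (T ⊕ I) := fun τ =>
    univ.filter fun z => z ∉ τ ∧ ScDom u (insert z τ)
  let doors : Finset (T ⊕ I) → Finset (T ⊕ I) := fun ρ =>
    ρ.filter fun z => (ρ.erase z).image c = univ.erase i0
  have hcount : ∑ τ ∈ D, (rooms τ).card = ∑ ρ ∈ R, (doors ρ).card := by
    rw [← card_sigma, ← card_sigma]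
    refine card_bij' (fun p _ => ⟨insert p.2 p.1, p.2⟩) (fun p _ => ⟨p.1.erase p.2, p.2⟩)
      ?_ ?_ ?_ ?_
    · rintro ⟨τ, z⟩ h
      simp only [D, R, rooms, doors, mem_sigma, mem_filter, mem_univ, true_and] at h ⊢
      obtain ⟨⟨h1, h2, h3⟩, h4, h5⟩ := h
      refine ⟨⟨by rw [card_insert_of_notMem h4, h1], h5⟩, mem_insert_self _ _, ?_⟩
      rw [erase_insert h4, h3]
    · rintro ⟨ρ, z⟩ h
      simp only [D, R, rooms, doors, mem_sigma, mem_filter, mem_univ, true_and] at h ⊢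
      obtain ⟨⟨h1, h2⟩, h4, h5⟩ := h
      refine ⟨⟨by rw [card_erase_of_mem h4]; omega, h2.mono (erase_subset _ _), h5⟩,
        notMem_erase _ _, by rwa [insert_erase h4]⟩
    · rintro ⟨τ, z⟩ h
      simp only [D, R, rooms, doors, mem_sigma, mem_filter, mem_univ, true_and] at h ⊢
      rw [erase_insert h.2.1]
    · rintro ⟨ρ, z⟩ h
      simp only [D, R, rooms, doors, mem_sigma, mem_filter, mem_univ, true_and] at h ⊢
      rw [insert_erase h.2.1]
  have heven : Even (∑ ρ ∈ R, (doors ρ).card) := by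
    refine even_sum _ fun ρ hρ => ?_
    simp only [R, mem_filter, mem_univ, true_and] at hρ
    exact sc_even c i0 ρ hρ.1 (hcon ρ hρ.1 hρ.2)
  let τ0 : Finset (T ⊕ I) := (univ.erase i0).image Sum.inr
  have hτ0card : τ0.card + 1 = m := by
    rw [card_image_of_injective _ Sum.inr_injective, card_erase_of_mem (mem_univ _), card_univ]
    omega
  have hτ0dom : ScDom u τ0 := by
    rintro (t | p)
    · refine ⟨i0, fun x hx => ?_⟩
      obtain ⟨q, hq, rfl⟩ := mem_image.1 hx
      exact (h1 i0 q t (mem_erase.1 hq).1).le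
    · refine ⟨p, fun x hx => ?_⟩
      obtain ⟨q, hq, rfl⟩ := mem_image.1 hx
      exact h0' p q
  have hτ0 : τ0 ∈ D := by
    simp only [D, mem_filter, mem_univ, true_and]
    refine ⟨hτ0card, hτ0dom, ?_⟩
    rw [image_image]
    have : c ∘ Sum.inr = id := funext hcs
    rw [this, image_id]
  have hmax : ∀ (P : T ⊕ I → Prop) (k : I), (∃ y, P y) →
      ∃ z, P z ∧ ∀ y, P y → u k y ≤ u k z := by
    rintro P k ⟨y, hy⟩
    obtain ⟨z, hz, hzm⟩ := (univ.filter P).exists_max_image (u k) ⟨y, by simp [hy]⟩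
    exact ⟨z, by simpa using hz, fun y hy => hzm y (by simp [hy])⟩
  have hrest : ∀ τ ∈ D, τ ≠ τ0 → Even (rooms τ).card := by
    intro τ hτ hne
    simp only [D, mem_filter, mem_univ, true_and] at hτ
    obtain ⟨hτc, hτd, hτi⟩ := hτ
    have hτne : τ.Nonempty := by rw [← card_pos]; omega
    obtain ⟨a, ha, hmin, hs⟩ := sc_argmin hu hτne hτd
    obtain ⟨i, j, hij, haij, hun⟩ := sc_pair ha hs hτc
    have hroom := sc_room_iff hu hτd hτc ha hmin hs hij haij hun
    have htT : ∃ t, Sum.inl t ∈ τ := by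
      by_contra! hno
      apply hne
      refine eq_of_subset_of_card_le ?_ (by omega)
      rintro (t | p) hx
      · exact absurd hx (hno t)
      · refine mem_image_of_mem _ (mem_erase.2 ⟨?_, mem_univ _⟩)
        have : c (Sum.inr p) ∈ τ.image c := mem_image_of_mem _ hx
        rw [hτi, hcs] at this
        exact (mem_erase.1 this).1
    obtain ⟨t, ht⟩ := htT
    have hY : ∀ k, ∃ y, ∀ p, p ≠ k → u p (a p) < u p y := fun k =>
      ⟨Sum.inr k, fun p hp => (hmin p _ ht).trans_lt (h1 p k t hp.symm)⟩
    choose z hz hzm using fun k => hmax _ k (hY k)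
    have hzne : z i ≠ z j := by
      intro h
      -- z i beats every minimum
      obtain ⟨p, hp⟩ := hτd (z i)
      have h2 : u p (a p) < u p (z i) := by
        by_cases hpi : p = i
        · rw [h]; exact hz j p (by rw [hpi]; exact hij)
        · exact hz i p hpi
      exact absurd (hp _ (ha p)) (not_le.2 h2)
    have : rooms τ = {z i, z j} := by
      ext x
      simp only [rooms, mem_filter, mem_univ, true_and, mem_insert, mem_singleton]
      rw [hroom]
      constructor
      · rintro ⟨k, hk, hk1, hk2⟩
        have : x = z k := hu k (le_antisymm (hzm k x hk1) (hk2 _ (hz k)))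
        rcases hk with rfl | rfl
        · exact Or.inl this
        · exact Or.inr this
      · rintro (rfl | rfl)
        · exact ⟨i, Or.inl rfl, hz i, hzm i⟩
        · exact ⟨j, Or.inr rfl, hz j, hzm j⟩
    rw [this, card_pair hzne]
    exact even_two
  have hodd : (rooms τ0).card = 1 := by
    have hτne : τ0.Nonempty := by rw [← card_pos]; omega
    obtain ⟨a, ha, hmin, hs⟩ := sc_argmin hu hτne hτ0dom
    obtain ⟨i, j, hij, haij, hun⟩ := sc_pair ha hs hτ0card
    have hroom := sc_room_iff hu hτ0dom hτ0card ha hmin hs hij haij hun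
    have hap : ∀ p, p ≠ i0 → a p = Sum.inr p := by
      intro p hp
      refine hu p (le_antisymm (hmin p _ (mem_image_of_mem _ (by simp [hp]))) ?_)
      obtain ⟨q, hq, hq'⟩ := mem_image.1 (ha p)
      rw [← hq']; exact h0' p q
    obtain ⟨j0, hj0, hj0'⟩ := mem_image.1 (ha i0)
    have hj0ne : j0 ≠ i0 := (mem_erase.1 hj0).1
    have hpair := hun i0 j0 hj0ne.symm (by rw [hap j0 hj0ne, hj0'])
    have hk : ∀ k, (k = i ∨ k = j) ↔ (k = i0 ∨ k = j0) := by
      intro k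
      rcases hpair with ⟨rfl, rfl⟩ | ⟨rfl, rfl⟩
      · rfl
      · exact or_comm
    obtain ⟨t⟩ := hT
    obtain ⟨z, hz, hzm⟩ := hmax (fun y => ∀ p, p ≠ i0 → u p (a p) < u p y) i0
      ⟨Sum.inl t, fun p hp => by rw [hap p hp]; exact h0 p t⟩
    rw [card_eq_one]
    refine ⟨z, ?_⟩
    ext x
    simp only [rooms, mem_filter, mem_univ, true_and, mem_singleton]
    rw [hroom]
    constructor
    · rintro ⟨k, hk1, hk2, hk3⟩
      rcases (hk k).1 hk1 with rfl | rfl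
      · exact hu k (le_antisymm (hzm x hk2) (hk3 _ hz))
      · exfalso
        have h3 := hk2 i0 hj0ne.symm
        rw [← hj0'] at h3
        rcases x with t' | p
        · exact absurd (h1 i0 k t' hj0ne) (not_lt.2 h3.le)
        · have hpk : p ≠ k := by rintro rfl; exact lt_irrefl _ h3
          by_cases hp0 : p = i0
          · subst hp0
            exact absurd (h0' p k) (not_le.2 h3)
          · have := hk2 p hpk
            rw [hap p hp0] at this
            exact lt_irrefl _ this
    · rintro rfl
      exact ⟨i0, (hk i0).2 (Or.inl rfl), hz, hzm⟩
  rw [← hcount, ← add_sum_erase _ _ hτ0, hodd] at heven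
  have h2 : Even (∑ τ ∈ D.erase τ0, (rooms τ).card) :=
    even_sum _ fun τ hτ => hrest τ (mem_erase.1 hτ).2 (mem_erase.1 hτ).1
  rw [Nat.even_add] at heven
  exact absurd (heven.2 h2) (by decide)

/-- The Scarf lemma on the grid of the standard simplex. -/
lemma scarf_grid {I : Type*} [Fintype I] [DecidableEq I] [Nontrivial I] (N : ℕ)
    (c : {a : I → Fin (N + 1) // ∑ i, (a i : ℕ) = N} → I) :
    ∃ (C : Finset I) (t : I → {a : I → Fin (N + 1) // ∑ i, (a i : ℕ) = N}),
      (∀ i ∈ C, c (t i) = i) ∧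
      ∀ y : {a : I → Fin (N + 1) // ∑ i, (a i : ℕ) = N}, ∃ i ∈ C, ∀ j ∈ C,
        (y.1 i : ℕ) ≤ (t j).1 i := by
  classical
  obtain ⟨i1⟩ : Nonempty I := inferInstance
  let T := {a : I → Fin (N + 1) // ∑ i, (a i : ℕ) = N}
  have hT : Nonempty T := by
    refine ⟨⟨fun i => if i = i1 then Fin.last N else 0, ?_⟩⟩
    simp [apply_ite]
  let K := Fintype.card T
  let e : T ≃ Fin K := Fintype.equivFin T
  let e' : I ≃ Fin (Fintype.card I) := Fintype.equivFin I
  let u : I → T ⊕ I → ℕ := fun i => Sum.elim (fun a => 1 + (a.1 i : ℕ) * K + e a)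
    (fun j => if j = i then 0 else 1 + (N + 1) * K + e' j)
  have hmono : ∀ i (a b : T), u i (Sum.inl a) ≤ u i (Sum.inl b) → (a.1 i : ℕ) ≤ b.1 i := by
    intro i a b h
    simp only [u, Sum.elim_inl] at h
    by_contra! hlt
    have h1 := (e b).2
    have h2 : ((b.1 i : ℕ) + 1) * K ≤ (a.1 i : ℕ) * K := Nat.mul_le_mul_right _ hlt
    rw [add_mul, one_mul] at h2
    omega
  have hlt : ∀ i (a : T), u i (Sum.inl a) < 1 + (N + 1) * K := by
    intro i a
    simp only [u, Sum.elim_inl]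
    have h1 := (e a).2
    have h2 : (a.1 i : ℕ) * K ≤ N * K := Nat.mul_le_mul_right _ (by have := (a.1 i).2; omega)
    rw [add_mul, one_mul]
    omega
  have hpos : ∀ i (a : T), 0 < u i (Sum.inl a) := by
    intro i a
    simp only [u, Sum.elim_inl]
    omega
  have hself : ∀ i, u i (Sum.inr i) = 0 := by intro i; simp [u]
  have hbig : ∀ i j, j ≠ i → u i (Sum.inr j) = 1 + (N + 1) * K + e' j := by
    intro i j h; simp [u, h]
  have hu : ∀ i, Function.Injective (u i) := by
    rintro i (a | p) (b | q) h
    · have h1 := le_antisymm (hmono i a b h.le) (hmono i b a h.ge)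
      simp only [u, Sum.elim_inl, h1] at h
      have : e a = e b := Fin.ext (by omega)
      rw [e.injective this]
    · exfalso
      by_cases hq : q = i
      · subst hq; rw [hself] at h; have := hpos q a; omega
      · rw [hbig i q hq] at h; have := hlt i a; omega
    · exfalso
      by_cases hq : p = i
      · subst hq; rw [hself] at h; have := hpos p b; omega
      · rw [hbig i p hq] at h; have := hlt i b; omega
    · by_cases hp : p = i <;> by_cases hq : q = i
      · rw [hp, hq]
      · rw [hp, hself, hbig i q hq] at h; omega
      · rw [hq, hself, hbig i p hp] at h; omega
      · rw [hbig i p hp, hbig i q hq] at h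
        have : e' p = e' q := Fin.ext (by omega)
        rw [e'.injective this]
  obtain ⟨ρ, hρc, hρd, hρi⟩ := scarf u hu (fun i t => by rw [hself]; exact hpos i t)
    (fun i j => by rw [hself]; exact Nat.zero_le _)
    (fun i j t h => by rw [hbig i j h]; have := hlt i t; omega) hT (Sum.elim c id) (fun i => rfl)
  have hex : ∀ i, ∃ t : T, Sum.inr i ∉ ρ → Sum.inl t ∈ ρ ∧ c t = i := by
    intro i
    have : i ∈ ρ.image (Sum.elim c id) := by rw [hρi]; exact mem_univ _
    obtain ⟨x, hx, hxi⟩ := mem_image.1 this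
    rcases x with t | p
    · exact ⟨t, fun _ => ⟨hx, hxi⟩⟩
    · refine ⟨hT.some, fun h => ?_⟩
      simp only [Sum.elim_inr, id] at hxi
      exact absurd (hxi ▸ hx) h
  choose t ht using hex
  refine ⟨univ.filter fun i => Sum.inr i ∉ ρ, t, ?_, ?_⟩
  · intro i hi
    exact (ht i (mem_filter.1 hi).2).2
  · intro y
    obtain ⟨i, hi⟩ := hρd (Sum.inl y)
    refine ⟨i, ?_, ?_⟩
    · refine mem_filter.2 ⟨mem_univ _, fun h => ?_⟩
      have := hi _ h
      rw [hself] at this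
      have := hpos i y
      omega
    · intro j hj
      exact hmono i y (t j) (hi _ (ht j (mem_filter.1 hj).2).1)

lemma sc_close {I : Type*} [Fintype I] [DecidableEq I] [Nontrivial I] (N : ℕ)
    (c : {a : I → Fin (N + 1) // ∑ i, (a i : ℕ) = N} → I) :
    ∃ (C : Finset I) (t : I → {a : I → Fin (N + 1) // ∑ i, (a i : ℕ) = N}) (j0 : I), 
      (∀ i ∈ C, c (t i) = i) ∧ 
      (∀ j ∈ C, ∀ i, ((t j).1 i : ℕ) ≤ (t j0).1 i + Fintype.card I ∧
        ((t j0).1 i : ℕ) ≤ (t j).1 i + Fintype.card I) ∧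
      (∀ i, i ∉ C → ((t j0).1 i : ℕ) ≤ Fintype.card I) := by
  classical
  obtain ⟨C, t, hct, hdom⟩ := scarf_grid N c
  obtain ⟨i1⟩ : Nonempty I := inferInstance
  obtain ⟨j0, hj0, -⟩ := hdom ⟨fun i => if i = i1 then Fin.last N else 0, by simp [apply_ite]⟩
  have hCm : C.card ≤ Fintype.card I := card_le_univ C
  choose b hb hbmin using fun i => C.exists_min_image (fun j => ((t j).1 i : ℕ)) ⟨j0, hj0⟩
  let M : I → ℕ := fun i => (t (b i)).1 i
  have hM : N + 1 ≤ ∑ i ∈ C, (M i + 1) := by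
    by_contra! hlt
    let y : I → ℕ := fun i => (if i ∈ C then M i + 1 else 0) +
      (if i = j0 then N - ∑ i ∈ C, (M i + 1) else 0)
    have hy : ∑ i, y i = N := by
      simp only [y, sum_add_distrib]
      rw [sum_ite_mem, univ_inter, sum_ite_eq' univ j0, if_pos (mem_univ _)]
      simp only [sum_add_distrib] at hlt ⊢
      omega
    have hyle : ∀ i, y i < N + 1 := by
      intro i
      have := single_le_sum (f := y) (fun i _ => Nat.zero_le _) (mem_univ i)
      omega
    obtain ⟨i, hi, hij⟩ := hdom ⟨fun i => ⟨y i, hyle i⟩, hy⟩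
    have h1 := hij (b i) (hb i)
    simp only [y, hi, if_true] at h1
    change _ ≤ M i at h1
    omega
  have hsplit : ∀ j ∈ C, (∀ i ∈ C, ((t j).1 i : ℕ) ≤ M i + C.card) ∧
      (∀ i, i ∉ C → ((t j).1 i : ℕ) ≤ C.card) := by
    intro j hj
    have hsum := (t j).2
    have hd : ∀ i, ((t j).1 i : ℕ) = M i + (((t j).1 i : ℕ) - M i) := by
      intro i
      have := hbmin i j hj
      change M i ≤ _ at this
      omega
    have hCs : ∑ i ∈ C, ((t j).1 i : ℕ) = ∑ i ∈ C, M i + ∑ i ∈ C, (((t j).1 i : ℕ) - M i) := by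
      rw [← sum_add_distrib]; exact sum_congr rfl fun i _ => hd i
    rw [sum_add_distrib, sum_const, smul_eq_mul, mul_one] at hM
    constructor
    · intro i hi
      have h1 : ∑ i ∈ C, ((t j).1 i : ℕ) ≤ ∑ i, ((t j).1 i : ℕ) :=
        sum_le_sum_of_subset (subset_univ _)
      have h2 := single_le_sum (f := fun i => ((t j).1 i : ℕ) - M i)
        (fun i _ => Nat.zero_le _) hi
      omega
    · intro i hi
      have h1 : ∑ i ∈ insert i C, ((t j).1 i : ℕ) ≤ ∑ i, ((t j).1 i : ℕ) :=
        sum_le_sum_of_subset (subset_univ _)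
      rw [sum_insert hi] at h1
      omega
  refine ⟨C, t, j0, hct, ?_, ?_⟩
  · intro j hj i
    by_cases hi : i ∈ C
    · have h1 := (hsplit j hj).1 i hi
      have h2 := (hsplit j0 hj0).1 i hi
      have h3 := hbmin i j hj
      have h4 := hbmin i j0 hj0
      change M i ≤ _ at h3
      change M i ≤ _ at h4
      omega
    · have h1 := (hsplit j hj).2 i hi
      have h2 := (hsplit j0 hj0).2 i hi
      omega
  · intro i hi
    have h2 := (hsplit j0 hj0).2 i hi
    omega

open Filter Topology in
/-- A variational inequality on the simplex. -/
lemma simplex_vi {I : Type*} [Fintype I] [DecidableEq I] [Nontrivial I]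
    (w : I → (I → ℝ) → ℝ) (hw : ∀ i, ContinuousOn (w i) (stdSimplex ℝ I)) :
    ∃ x ∈ stdSimplex ℝ I, ∀ j k, w k x < w j x → x j = 0 := by
  classical
  have key : ∀ n : ℕ, ∃ x ∈ stdSimplex ℝ I, ∀ j,
      x j ≤ (Fintype.card I : ℝ) / ((n : ℝ) + 1) ∨
      ∃ p ∈ stdSimplex ℝ I, dist p x ≤ (Fintype.card I : ℝ) / ((n : ℝ) + 1) ∧
        ∀ k, w j p ≤ w k p := by
    intro n
    let P : {a : I → Fin (n + 1 + 1) // ∑ i, (a i : ℕ) = n + 1} → I → ℝ :=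
      fun a i => ((a.1 i : ℕ) : ℝ) / ((n : ℝ) + 1)
    have hn : (0 : ℝ) < (n : ℝ) + 1 := by positivity
    have hP : ∀ a, P a ∈ stdSimplex ℝ I := by
      intro a
      refine ⟨fun i => by positivity, ?_⟩
      simp only [P]
      rw [← sum_div, ← Nat.cast_sum, a.2]
      push_cast
      exact div_self hn.ne'
    choose c hc using fun a => Finite.exists_min (fun i => w i (P a))
    obtain ⟨C, t, j0, h1, h2, h3⟩ := sc_close (n + 1) c
    refine ⟨P (t j0), hP _, fun j => ?_⟩
    by_cases hj : j ∈ C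
    · right
      refine ⟨P (t j), hP _, ?_, fun k => ?_⟩
      · rw [dist_pi_le_iff (by positivity)]
        intro i
        obtain ⟨ha, hb⟩ := h2 j hj i
        simp only [P]
        rw [Real.dist_eq, ← sub_div, abs_div, abs_of_pos hn]
        gcongr
        rw [abs_le]
        have ha' : (((t j).1 i : ℕ) : ℝ) ≤ ((t j0).1 i : ℕ) + Fintype.card I := by exact_mod_cast ha
        have hb' : (((t j0).1 i : ℕ) : ℝ) ≤ ((t j).1 i : ℕ) + Fintype.card I := by exact_mod_cast hb
        constructor <;> linarith
      · have := hc (t j) k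
        rwa [h1 j hj] at this
    · left
      simp only [P]
      gcongr
      exact h3 j hj
  choose x hx hxj using key
  obtain ⟨z, hz, φ, hφ, hlim⟩ := (isCompact_stdSimplex ℝ I).tendsto_subseq hx
  refine ⟨z, hz, fun j k hjk => ?_⟩
  have hr : Tendsto (fun n : ℕ => (Fintype.card I : ℝ) / ((φ n : ℝ) + 1)) atTop (𝓝 0) := by
    have h := (tendsto_const_div_atTop_nhds_zero_nat (Fintype.card I : ℝ)).comp
      ((tendsto_add_atTop_nat 1).comp hφ.tendsto_atTop)
    refine h.congr fun n => ?_
    simp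
  have hU : ∀ᶠ p in 𝓝[stdSimplex ℝ I] z, w k p < w j p :=
    (hw k z hz).eventually_lt (hw j z hz) hjk
  obtain ⟨ε, hε, hball⟩ := Metric.mem_nhdsWithin_iff.1 hU
  have hev : ∀ᶠ n in atTop, x (φ n) j ≤ (Fintype.card I : ℝ) / ((φ n : ℝ) + 1) := by
    filter_upwards [hr.eventually_lt_const (half_pos hε),
      (Metric.tendsto_nhds.1 hlim) _ (half_pos hε)] with n hn1 hn2
    rcases hxj (φ n) j with h | ⟨p, hp, hpd, hpk⟩
    · exact h
    · exfalso
      have hpz : dist p z < ε := by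
        have := dist_triangle p (x (φ n)) z
        simp only [Function.comp] at hn2
        linarith
      have : w k p < w j p := hball ⟨hpz, hp⟩
      linarith [hpk k]
  have hle : z j ≤ 0 := le_of_tendsto_of_tendsto ((tendsto_pi_nhds.1 hlim) j) hr hev
  exact le_antisymm hle (hz.1 j)

open scoped InnerProductSpace in
lemma sc_vi {E : Type*} [NormedAddCommGroup E] [InnerProductSpace ℝ E] {B : Set E}
    (hBc : IsCompact B) (hBconv : Convex ℝ B) (hBne : B.Nonempty) (v : E → E)
    (hv : ContinuousOn v B) : ∃ x ∈ B, ∀ y ∈ B, 0 ≤ ⟪y - x, v x⟫_ℝ := by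
  classical
  obtain ⟨b0, hb0⟩ := hBne
  have hcont : ∀ y, ContinuousOn (fun x => ⟪y - x, v x⟫_ℝ) B := fun y =>
    (continuousOn_const.sub continuousOn_id).inner hv
  have hcl : ∀ y : B, IsClosed (B ∩ (fun x => ⟪y.1 - x, v x⟫_ℝ) ⁻¹' Set.Ici 0) := fun y =>
    (hcont y).preimage_isClosed_of_isClosed hBc.isClosed isClosed_Ici
  have hfin : ∀ s : Finset B,
      (B ∩ ⋂ y ∈ s, (B ∩ (fun x => ⟪y.1 - x, v x⟫_ℝ) ⁻¹' Set.Ici 0)).Nonempty := by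
    intro s
    let y : s ⊕ Bool → E := Sum.elim (fun i => i.1.1) (fun _ => b0)
    have hy : ∀ i, y i ∈ B := by
      rintro (i | i)
      · exact i.1.2
      · exact hb0
    let X : (s ⊕ Bool → ℝ) → E := fun t => ∑ i, t i • y i
    have hXc : Continuous X := by fun_prop
    have hX : ∀ t ∈ stdSimplex ℝ (s ⊕ Bool), X t ∈ B := fun t ht =>
      hBconv.sum_mem (fun i _ => ht.1 i) ht.2 (fun i _ => hy i)
    have : Nontrivial (s ⊕ Bool) := ⟨⟨Sum.inr true, Sum.inr false, by simp⟩⟩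
    obtain ⟨t, ht, htw⟩ := simplex_vi (fun i t => ⟪y i, v (X t)⟫_ℝ) (fun i =>
      continuousOn_const.inner (hv.comp hXc.continuousOn hX))
    have hle : ∀ i, 0 ≤ ⟪y i - X t, v (X t)⟫_ℝ := by
      intro k
      rw [inner_sub_left, sub_nonneg]
      have h1 : ⟪X t, v (X t)⟫_ℝ = ∑ i, t i * ⟪y i, v (X t)⟫_ℝ := by
        conv_lhs => simp only [X]
        rw [sum_inner]
        exact sum_congr rfl fun i _ => by rw [real_inner_smul_left]
      have h2 : ⟪y k, v (X t)⟫_ℝ = ∑ i, t i * ⟪y k, v (X t)⟫_ℝ := by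
        rw [← sum_mul, ht.2, one_mul]
      rw [h1, h2]
      refine sum_le_sum fun i _ => ?_
      by_cases h : ⟪y k, v (X t)⟫_ℝ < ⟪y i, v (X t)⟫_ℝ
      · rw [htw i k h]; simp
      · exact mul_le_mul_of_nonneg_left (not_lt.1 h) (ht.1 i)
    refine ⟨X t, hX t ht, ?_⟩
    simp only [Set.mem_iInter]
    intro b hb
    exact ⟨hX t ht, hle (Sum.inl ⟨b, hb⟩)⟩
  obtain ⟨x, hx, hx'⟩ := hBc.inter_iInter_nonempty _ hcl hfin
  refine ⟨x, hx, fun y hy => ?_⟩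
  exact (Set.mem_iInter.1 hx' ⟨y, hy⟩).2

open scoped InnerProductSpace in
/-- Centre points exist, and lie in `B`. -/
lemma sc_center (d n : ℕ) (hn : 1 ≤ n)
    (B : Set (EuclideanSpace ℝ (Fin d))) (hBconv : Convex ℝ B)
    (q : Fin n → EuclideanSpace ℝ (Fin d))
    (hout : {i | q i ∉ B}.ncard ≤ (n + d) / (d + 1) - 1) :
    ∃ y ∈ B, ∀ v : EuclideanSpace ℝ (Fin d),
      (n + d) / (d + 1) ≤ {i | ⟪y, v⟫_ℝ ≤ ⟪q i, v⟫_ℝ}.ncard := by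
  classical
  set l := (n + d) / (d + 1) with hl
  have hl1 : 1 ≤ l := by rw [hl, Nat.le_div_iff_mul_le (by omega)]; omega
  have hl2 : (d + 1) * (l - 1) < n := by
    have : l * (d + 1) ≤ n + d := Nat.div_mul_le_self _ _
    rw [Nat.mul_sub, mul_one, mul_comm]
    omega
  have hln : l ≤ n := by
    by_contra! h
    have : 1 * (l - 1) ≤ (d + 1) * (l - 1) := Nat.mul_le_mul_right _ (by omega)
    omega
  let F : Finset (Fin n) → Set (EuclideanSpace ℝ (Fin d)) := fun S => convexHull ℝ (q '' S)
  have hH : (⋂ S ∈ powersetCard (n - (l - 1)) (univ : Finset (Fin n)), F S).Nonempty := by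
    refine Convex.helly_theorem' (𝕜 := ℝ) (fun S _ => convex_convexHull ℝ _) ?_
    intro J hJ hJc
    rw [finrank_euclideanSpace_fin] at hJc
    have hcard : (J.biUnion fun S => Sᶜ).card < n := by
      refine lt_of_le_of_lt (card_biUnion_le_card_mul J _ (l - 1) ?_) (lt_of_le_of_lt
        (Nat.mul_le_mul_right _ hJc) hl2)
      intro S hS
      have := (mem_powersetCard.1 (hJ hS)).2
      rw [card_compl, Fintype.card_fin]
      omega
    obtain ⟨i, hi⟩ : ∃ i, i ∉ J.biUnion fun S => Sᶜ := by
      by_contra! hall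
      rw [(eq_univ_iff_forall.2 hall), card_univ, Fintype.card_fin] at hcard
      exact lt_irrefl _ hcard
    refine ⟨q i, ?_⟩
    simp only [Set.mem_iInter]
    intro S hS
    refine subset_convexHull ℝ _ (Set.mem_image_of_mem _ ?_)
    by_contra hiS
    exact hi (mem_biUnion.2 ⟨S, hS, by simpa using hiS⟩)
  obtain ⟨y, hy⟩ := hH
  simp only [Set.mem_iInter] at hy
  have hsub : ∀ A : Set (Fin n), A.ncard ≤ l - 1 → y ∈ convexHull ℝ (q '' Aᶜ) := by
    intro A hA
    have h1 : n - (l - 1) ≤ (univ.filter fun i => i ∉ A).card := by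
      have h2 := card_filter_add_card_filter_not (s := (univ : Finset (Fin n))) (fun i => i ∈ A)
      rw [card_univ, Fintype.card_fin] at h2
      have h3 : A.ncard = (univ.filter fun i => i ∈ A).card := by
        rw [← Set.ncard_coe_finset]; congr 1; ext; simp
      omega
    obtain ⟨S, hS, hSc⟩ := exists_subset_card_eq h1
    refine convexHull_mono (Set.image_mono ?_) (hy S (mem_powersetCard.2 ⟨subset_univ _, hSc⟩))
    intro i hi
    exact (mem_filter.1 (hS hi)).2
  refine ⟨y, ?_, fun v => ?_⟩
  · refine convexHull_min ?_ hBconv (hsub _ hout)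
    rintro _ ⟨i, hi, rfl⟩
    simpa using hi
  · by_contra! hlt
    have h1 := hsub _ (Nat.le_sub_one_of_lt hlt)
    have h2 : convexHull ℝ (q '' {i | ⟪y, v⟫_ℝ ≤ ⟪q i, v⟫_ℝ}ᶜ) ⊆ {z | ⟪z, v⟫_ℝ < ⟪y, v⟫_ℝ} := by
      refine convexHull_min ?_ ?_
      · rintro _ ⟨i, hi, rfl⟩
        simpa using hi
      · refine convex_halfSpace_lt ⟨fun a b => inner_add_left _ _ _, fun a b => ?_⟩ _
        rw [real_inner_smul_left, smul_eq_mul]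
    have h3 : ⟪y, v⟫_ℝ < ⟪y, v⟫_ℝ := h2 h1
    exact lt_irrefl _ h3

end ScarfPart



/-- A fixed-point / central point lemma: if `B ⊂ ℝ^d` is a nonempty convex compact
set, `f_1, …, f_n : B → ℝ^d` are continuous, `l = ⌊(n+d)/(d+1)⌋`, and for every
`x ∈ B` at most `l-1` of the points `f_i(x)` lie outside `B`, then there is `x ∈ B`
such that every closed halfspace containing `x` contains at least `l` of the points
`f_i(x)` (counted with multiplicity, i.e. counting indices). -/
theorem central_fixed_point (d n : ℕ) (hn : 1 ≤ n)
    (B : Set (EuclideanSpace ℝ (Fin d)))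
    (hBc : IsCompact B) (hBconv : Convex ℝ B) (hBne : B.Nonempty)
    (f : Fin n → EuclideanSpace ℝ (Fin d) → EuclideanSpace ℝ (Fin d))
    (hf : ∀ i, ContinuousOn (f i) B)
    (hout : ∀ x ∈ B, {i | f i x ∉ B}.ncard ≤ (n + d) / (d + 1) - 1) :
    ∃ x ∈ B, ∀ (v : EuclideanSpace ℝ (Fin d)) (c : ℝ), v ≠ 0 → c ≤ ⟪x, v⟫_ℝ →
      (n + d) / (d + 1) ≤ {i | c ≤ ⟪f i x, v⟫_ℝ}.ncard := by
  classical
  by_contra! hcon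
  have hctr := fun x hx => sc_center d n hn B hBconv (fun i => f i x) (hout x hx)
  choose! y hyB hy using hctr
  have : CompactSpace B := isCompact_iff_compactSpace.1 hBc
  obtain ⟨g, hg⟩ := exists_continuous_forall_mem_convex_of_local_const (X := B)
    (t := fun x : B => {v : EuclideanSpace ℝ (Fin d) | ⟪y x.1 - x.1, v⟫_ℝ < 0})
    (fun x => convex_halfSpace_lt
      ⟨fun a b => inner_add_right _ _ _, fun a b => by
        rw [real_inner_smul_right, smul_eq_mul]⟩ _)
    (by
      intro x
      obtain ⟨v, c, -, hcx, hlt⟩ := hcon x.1 x.2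
      refine ⟨v, ?_⟩
      have hev : ∀ i, ∀ᶠ z : B in nhds x, ⟪f i x.1, v⟫_ℝ < c → ⟪f i z.1, v⟫_ℝ < ⟪z.1, v⟫_ℝ := by
        intro i
        by_cases h : ⟪f i x.1, v⟫_ℝ < c
        · have hc1 : Continuous fun z : B => ⟪f i z.1, v⟫_ℝ :=
            (continuousOn_iff_continuous_domRestrict.1 (hf i)).inner continuous_const
          have hc2 : Continuous fun z : B => ⟪z.1, v⟫_ℝ :=
            continuous_subtype_val.inner continuous_const
          filter_upwards [(hc1.tendsto x).eventually_lt (hc2.tendsto x) (h.trans_le hcx)]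
            with z hz _ using hz
        · exact Filter.Eventually.of_forall fun z h' => absurd h' h
      filter_upwards [Filter.eventually_all.2 hev] with z hz
      have h1 := hy z.1 z.2 v
      obtain ⟨i, hi, hi'⟩ : ∃ i ∈ {i | ⟪y z.1, v⟫_ℝ ≤ ⟪f i z.1, v⟫_ℝ},
          i ∉ {i | c ≤ ⟪f i x.1, v⟫_ℝ} :=
        Set.exists_mem_notMem_of_ncard_lt_ncard (hlt.trans_le h1)
      have h2 := hz i (not_le.1 hi')
      simp only [Set.mem_ofPred_eq] at hi ⊢
      rw [inner_sub_left]
      linarith)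
  obtain ⟨x, hx, hxv⟩ := sc_vi hBc hBconv hBne
    (fun x => if h : x ∈ B then g ⟨x, h⟩ else 0) (by
      rw [continuousOn_iff_continuous_domRestrict]
      exact g.continuous.congr fun z => by simp [z.2])
  have h1 := hxv (y x) (hyB x hx)
  have h2 : ⟪y x - x, g ⟨x, hx⟩⟫_ℝ < 0 := hg ⟨x, hx⟩
  simp only [hx, dif_pos] at h1
  linarith
end

section
/- Let h_1, …, h_n be hyperplanes in ℝ^d and let π_1, …, π_n denote the orthogonal projections of ℝ^d onto h_1, …, h_n respectively. Then there exists a compact convex set P ⊂ ℝ^d with nonempty interior such that π_i(P) ⊆ P for every i = 1, …, n. -/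
open scoped InnerProductSpace

/-- A hyperplane in `ℝ^d`: the solution set of one nontrivial linear equation. -/
def IsHyperplane {d : ℕ} (h : Set (EuclideanSpace ℝ (Fin d))) : Prop :=
  ∃ (v : EuclideanSpace ℝ (Fin d)) (c : ℝ), v ≠ 0 ∧ h = {y | ⟪y, v⟫_ℝ = c}

section ProjectionWords

variable {E : Type*} [NormedAddCommGroup E] [InnerProductSpace ℝ E]
variable {ι : Type*}

/-- Linear reflection-free projection along a unit vector. -/
def linP (u : E) (x : E) : E := x - ⟪x, u⟫_ℝ • u

/-- Affine projection along a unit vector. -/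
def affP (u : E) (c : ℝ) (x : E) : E := x - (⟪x, u⟫_ℝ - c) • u

/-- Words of linear projections. -/
def linW (u : ι → E) : List ι → E → E
  | [], x => x
  | i :: l, x => linP (u i) (linW u l x)

/-- Words of affine projections. -/
def affW (u : ι → E) (c : ι → ℝ) : List ι → E → E
  | [], x => x
  | i :: l, x => affP (u i) (c i) (affW u c l x)

lemma linP_norm_sq (u : E) (hu : ‖u‖ = 1) (x : E) :
    ‖linP u x‖ ^ 2 = ‖x‖ ^ 2 - ⟪x, u⟫_ℝ ^ 2 := by
  unfold linP
  rw [norm_sub_sq_real, norm_smul, inner_smul_right, hu, Real.norm_eq_abs, mul_one, sq_abs]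
  ring

lemma linP_norm_le (u : E) (hu : ‖u‖ = 1) (x : E) : ‖linP u x‖ ≤ ‖x‖ := by
  have h := linP_norm_sq u hu x
  nlinarith [sq_nonneg ⟪x, u⟫_ℝ, norm_nonneg x, norm_nonneg (linP u x)]

lemma linW_norm_le (u : ι → E) (hu : ∀ i, ‖u i‖ = 1) (l : List ι) (x : E) :
    ‖linW u l x‖ ≤ ‖x‖ := by
  induction l with
  | nil => exact le_rfl
  | cons i l ih => exact (linP_norm_le _ (hu i) _).trans ih

lemma affP_sub (u : E) (c : ℝ) (x y : E) : affP u c x - affP u c y = linP u (x - y) := by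
  unfold affP linP
  rw [inner_sub_left]
  module

lemma affW_sub (u : ι → E) (c : ι → ℝ) (l : List ι) (x y : E) :
    affW u c l x - affW u c l y = linW u l (x - y) := by
  induction l with
  | nil => rfl
  | cons i l ih => simp only [affW, linW, affP_sub, ih]

lemma affW_append (u : ι → E) (c : ι → ℝ) (l m : List ι) (x : E) :
    affW u c (l ++ m) x = affW u c l (affW u c m x) := by
  induction l with
  | nil => rfl
  | cons i l ih => simp only [affW, List.cons_append, ih]

lemma linP_mem (V : Submodule ℝ E) (u : E) (hu : u ∈ V) (x : E) (hx : x ∈ V) : linP u x ∈ V :=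
  V.sub_mem hx (V.smul_mem _ hu)

lemma linW_mem (V : Submodule ℝ E) (u : ι → E) (l : List ι) (hu : ∀ i ∈ l, u i ∈ V) (x : E)
    (hx : x ∈ V) : linW u l x ∈ V := by
  induction l with
  | nil => exact hx
  | cons i l ih =>
    exact linP_mem V _ (hu i (by simp)) _ (ih fun j hj => hu j (by simp [hj]))

lemma affW_mem (V : Submodule ℝ E) (u : ι → E) (c : ι → ℝ) (l : List ι)
    (hu : ∀ i ∈ l, u i ∈ V) (x : E) (hx : x ∈ V) : affW u c l x ∈ V := by
  induction l with
  | nil => exact hx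
  | cons i l ih =>
    exact V.sub_mem (ih fun j hj => hu j (by simp [hj])) (V.smul_mem _ (hu i (by simp)))

lemma linW_add_orth (V : Submodule ℝ E) (u : ι → E) (l : List ι) (hu : ∀ i ∈ l, u i ∈ V) (a b : E)
    (hb : b ∈ Vᗮ) : linW u l (a + b) = linW u l a + b := by
  induction l with
  | nil => rfl
  | cons i l ih =>
    have h0 : ⟪b, u i⟫_ℝ = 0 := V.inner_left_of_mem_orthogonal (hu i (by simp)) hb
    simp only [linW, linP]
    rw [ih fun j hj => hu j (by simp [hj]), inner_add_left, h0]
    module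

lemma step_lemma [FiniteDimensional ℝ E] (V' : Submodule ℝ E) (u : E) (hu : ‖u‖ = 1) (c' : ℝ)
    (hc' : c' < 1) (hc0 : 0 ≤ c') :
    ∃ c : ℝ, 0 ≤ c ∧ c < 1 ∧ ∀ a ∈ V', ∀ a' ∈ V', ∀ b ∈ V'ᗮ, b ∈ V' ⊔ Submodule.span ℝ {u} →
      ‖a'‖ ≤ c' * ‖a‖ → ‖linP u (a' + b)‖ ≤ c * ‖a + b‖ := by
  let K : Set (E × E × E) := {p | p.1 ∈ V' ∧ p.2.1 ∈ V' ∧ p.2.2 ∈ V'ᗮ ∧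
    p.2.2 ∈ V' ⊔ Submodule.span ℝ {u} ∧ ‖p.2.1‖ ≤ c' * ‖p.1‖ ∧ ‖p.1‖ ^ 2 + ‖p.2.2‖ ^ 2 = 1}
  have pyth : ∀ a ∈ V', ∀ b ∈ V'ᗮ, ‖a + b‖ ^ 2 = ‖a‖ ^ 2 + ‖b‖ ^ 2 := by
    intro a ha b hb
    rw [norm_add_sq_real, V'.inner_right_of_mem_orthogonal ha hb]; ring
  have hKc : IsClosed K := by
    have h1 : IsClosed (V' : Set E) := V'.closed_of_finiteDimensional
    have h2 : IsClosed (V'ᗮ : Set E) := V'ᗮ.closed_of_finiteDimensional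
    have h3 : IsClosed ((V' ⊔ Submodule.span ℝ {u} : Submodule ℝ E) : Set E) :=
      Submodule.closed_of_finiteDimensional _
    refine (h1.preimage continuous_fst).inter ((h1.preimage (f := fun p : E × E × E => p.2.1)
      (by fun_prop)).inter ((h2.preimage (f := fun p : E × E × E => p.2.2) (by fun_prop)).inter
      ((h3.preimage (f := fun p : E × E × E => p.2.2) (by fun_prop)).inter
      ((isClosed_le (f := fun p : E × E × E => ‖p.2.1‖) (g := fun p => c' * ‖p.1‖)
        (by fun_prop) (by fun_prop)).inter
      (isClosed_eq (f := fun p : E × E × E => ‖p.1‖ ^ 2 + ‖p.2.2‖ ^ 2) (g := fun _ => 1)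
        (by fun_prop) (by fun_prop))))))
  have hKb : Bornology.IsBounded K := by
    refine (Metric.isBounded_closedBall (x := (0 : E × E × E)) (r := 1)).subset ?_
    rintro ⟨a, a', b⟩ ⟨-, -, -, -, h5, h6⟩
    simp only at h5 h6
    have ha : ‖a‖ ≤ 1 := by nlinarith [norm_nonneg a, sq_nonneg ‖b‖]
    have hb : ‖b‖ ≤ 1 := by nlinarith [norm_nonneg b, sq_nonneg ‖a‖]
    have ha' : ‖a'‖ ≤ 1 := by nlinarith [norm_nonneg a]
    simp [Prod.norm_def, ha, hb, ha']
  have hK : IsCompact K := Metric.isCompact_of_isClosed_isBounded hKc hKb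
  have hcont : Continuous fun p : E × E × E => ‖linP u (p.2.1 + p.2.2)‖ := by
    unfold linP; fun_prop
  have hlt : ∀ p ∈ K, ‖linP u (p.2.1 + p.2.2)‖ < 1 := by
    rintro ⟨a, a', b⟩ ⟨h1, h2, h3, h4, h5, h6⟩
    simp only at h1 h2 h3 h4 h5 h6 ⊢
    by_contra! hge
    have e1 := linP_norm_sq u hu (a' + b)
    rw [pyth a' h2 b h3] at e1
    have e2 : ‖a'‖ ^ 2 ≤ c' ^ 2 * ‖a‖ ^ 2 := by
      rw [← mul_pow]; exact pow_le_pow_left₀ (norm_nonneg _) h5 2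
    have e3 : c' ^ 2 < 1 := by nlinarith
    have e4 : (1 : ℝ) ≤ ‖linP u (a' + b)‖ ^ 2 := one_le_pow₀ hge
    have e5 : ‖a‖ ^ 2 = 0 := by
      have := sq_nonneg ⟪a' + b, u⟫_ℝ
      have := sq_nonneg ‖a‖
      nlinarith
    have ha0 : ‖a‖ = 0 := by simpa using e5
    have ha' : a' = 0 := by
      rw [ha0, mul_zero] at h5
      exact norm_le_zero_iff.1 h5
    have e6 : ⟪b, u⟫_ℝ = 0 := by
      subst ha'
      rw [zero_add, norm_zero] at e1
      have : ⟪b, u⟫_ℝ ^ 2 ≤ 0 := by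
        have := sq_nonneg ‖a‖
        rw [zero_add] at e4
        nlinarith
      nlinarith [pow_eq_zero_iff (two_ne_zero) |>.1 (le_antisymm this (sq_nonneg _))]
    have e7 : b = 0 := by
      obtain ⟨y, hy, z, hz, hyz⟩ := Submodule.mem_sup.1 h4
      obtain ⟨t, rfl⟩ := Submodule.mem_span_singleton.1 hz
      have : ⟪b, b⟫_ℝ = 0 := by
        nth_rewrite 2 [← hyz]
        rw [inner_add_right, inner_smul_right, e6, V'.inner_left_of_mem_orthogonal hy h3]; simp
      exact inner_self_eq_zero.1 this
    rw [ha0, e7] at h6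
    simp at h6
  obtain ⟨c, hc0', hc1, hc⟩ : ∃ c : ℝ, 0 ≤ c ∧ c < 1 ∧
      ∀ p ∈ K, ‖linP u (p.2.1 + p.2.2)‖ ≤ c := by
    rcases K.eq_empty_or_nonempty with he | hne
    · exact ⟨0, le_rfl, one_pos, by simp [he]⟩
    · obtain ⟨p, hp, hmax⟩ := hK.exists_isMaxOn hne hcont.continuousOn
      exact ⟨_, norm_nonneg _, hlt p hp, fun q hq => hmax hq⟩
  refine ⟨c, hc0', hc1, ?_⟩
  intro a ha a' ha' b hb hb' hle
  by_cases hr : ‖a + b‖ = 0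
  · have h := pyth a ha b hb
    rw [hr] at h
    have h1 : ‖a‖ = 0 := by nlinarith [sq_nonneg ‖a‖, sq_nonneg ‖b‖]
    have h2 : ‖b‖ = 0 := by nlinarith [sq_nonneg ‖a‖, sq_nonneg ‖b‖]
    rw [h1, mul_zero] at hle
    have h3 := norm_le_zero_iff.1 hle
    have h4 := norm_eq_zero.1 h2
    rw [hr, h3, h4]; simp [linP]
  · set r := ‖a + b‖ with hrdef
    have hrpos : 0 < r := lt_of_le_of_ne (norm_nonneg _) (Ne.symm hr)
    have hmem : (r⁻¹ • a, r⁻¹ • a', r⁻¹ • b) ∈ K := by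
      refine ⟨V'.smul_mem _ ha, V'.smul_mem _ ha', Submodule.smul_mem _ _ hb,
        Submodule.smul_mem _ _ hb', ?_, ?_⟩
      · simp only [norm_smul]
        rw [mul_left_comm]
        exact mul_le_mul_of_nonneg_left hle (norm_nonneg _)
      · simp only [norm_smul, mul_pow]
        rw [← mul_add, ← pyth a ha b hb, ← hrdef, norm_inv, Real.norm_of_nonneg hrpos.le]
        field_simp
    have h := hc _ hmem
    have e : linP u (r⁻¹ • a' + r⁻¹ • b) = r⁻¹ • linP u (a' + b) := by
      unfold linP
      rw [← smul_add, real_inner_smul_left]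
      module
    simp only at h
    rw [e, norm_smul, norm_inv, Real.norm_of_nonneg hrpos.le, inv_mul_le_iff₀ hrpos] at h
    linarith

lemma linear_contraction [FiniteDimensional ℝ E] [DecidableEq ι] (u : ι → E)
    (hu : ∀ i, ‖u i‖ = 1) (S : Finset ι) :
    ∃ c : ℝ, 0 ≤ c ∧ c < 1 ∧ ∀ l : List ι, l.toFinset = S →
      ∀ x ∈ Submodule.span ℝ (u '' (S : Set ι)), ‖linW u l x‖ ≤ c * ‖x‖ := by
  induction S using Finset.strongInduction with
  | H S ih =>
  have key : ∀ i : S, ∃ c : ℝ, 0 ≤ c ∧ c < 1 ∧ ∀ l : List ι, l.toFinset = S.erase i →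
      ∀ x ∈ Submodule.span ℝ (u '' (S : Set ι)), ‖linW u (i :: l) x‖ ≤ c * ‖x‖ := by
    rintro ⟨i, hi⟩
    obtain ⟨c', h0, h1, hc'⟩ := ih (S.erase i) (Finset.erase_ssubset hi)
    set V' := Submodule.span ℝ (u '' ((S.erase i : Finset ι) : Set ι)) with hV'
    obtain ⟨c, hc0, hc1, hc⟩ := step_lemma V' (u i) (hu i) c' h1 h0
    refine ⟨c, hc0, hc1, fun l hl x hx => ?_⟩
    have hVV : Submodule.span ℝ (u '' (S : Set ι)) = V' ⊔ Submodule.span ℝ {u i} := by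
      rw [hV', ← Submodule.span_union, ← Set.image_singleton, ← Set.image_union]
      congr 2
      ext j
      simp only [Finset.mem_coe, Set.mem_union, Finset.mem_erase, Set.mem_singleton_iff]
      by_cases hj : j = i <;> simp [hj, hi]
    have hl' : ∀ j ∈ l, u j ∈ V' := by
      intro j hj
      apply Submodule.subset_span
      refine ⟨j, ?_, rfl⟩
      rw [← hl]; simpa using hj
    obtain ⟨a, ha, b, hb, hab⟩ := V'.exists_add_mem_mem_orthogonal x
    subst hab
    have hbV : b ∈ V' ⊔ Submodule.span ℝ {u i} := by
      rw [hVV] at hx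
      have := Submodule.sub_mem _ hx (Submodule.mem_sup_left ha : a ∈ V' ⊔ _)
      simpa using this
    change ‖linP (u i) (linW u l (a + b))‖ ≤ _
    rw [linW_add_orth V' u l hl' a b hb]
    exact hc a ha _ (linW_mem V' u l hl' a ha) b hb hbV (hc' l hl a ha)
  choose c h0 h1 hc using key
  obtain ⟨C, hC0, hC1, hC⟩ : ∃ C : ℝ, 0 ≤ C ∧ C < 1 ∧ ∀ i, c i ≤ C := by
    rcases isEmpty_or_nonempty S with he | hne
    · exact ⟨0, le_rfl, one_pos, fun i => (he.false i).elim⟩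
    · obtain ⟨i, hi⟩ := Finite.exists_max c
      exact ⟨c i, h0 i, h1 i, hi⟩
  refine ⟨C, hC0, hC1, fun l => ?_⟩
  induction l with
  | nil =>
    intro hl x hx
    have : S = ∅ := by simpa using hl.symm
    subst this
    have : x = 0 := by simpa using hx
    subst this
    simp [linW]
  | cons i l ihl =>
    intro hl x hx
    have hiS : i ∈ S := by rw [← hl]; simp
    by_cases hi : i ∈ l
    · have : l.toFinset = S := by
        rw [← hl, List.toFinset_cons, Finset.insert_eq_of_mem (by simpa using hi)]
      exact (linP_norm_le _ (hu i) _).trans (ihl this x hx)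
    · have : l.toFinset = S.erase i := by
        rw [← hl, List.toFinset_cons, Finset.erase_insert (by simpa using hi)]
      exact (hc ⟨i, hiS⟩ l this x hx).trans
        (mul_le_mul_of_nonneg_right (hC _) (norm_nonneg _))

lemma list_split [DecidableEq ι] (l : List ι) (hl : l ≠ []) :
    ∃ (B : List ι) (i : ι) (m : List ι), l = B ++ i :: m ∧ i ∉ B ∧
      insert i B.toFinset = l.toFinset := by
  induction l using List.reverseRecOn with
  | nil => exact absurd rfl hl
  | append_singleton l i ih =>
    by_cases hi : i ∈ l
    · obtain ⟨B, j, m, h1, h2, h3⟩ := ih (List.ne_nil_of_mem hi)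
      refine ⟨B, j, m ++ [i], by simp [h1], h2, ?_⟩
      rw [h3]
      ext k
      simp only [List.mem_toFinset, List.mem_append, List.mem_singleton]
      constructor
      · exact Or.inl
      · rintro (h | rfl)
        · exact h
        · exact hi
    · refine ⟨l, i, [], rfl, hi, ?_⟩
      ext k
      simp [or_comm]

lemma affine_bounded [FiniteDimensional ℝ E] [DecidableEq ι] (u : ι → E) (c : ι → ℝ)
    (hu : ∀ i, ‖u i‖ = 1) (S : Finset ι) :
    ∃ K : ℝ, 0 ≤ K ∧ ∀ l : List ι, l.toFinset ⊆ S → ‖affW u c l 0‖ ≤ K := by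
  induction S using Finset.strongInduction with
  | H S ih =>
  have key : ∀ i : S, ∃ K : ℝ, 0 ≤ K ∧ ∀ l : List ι, l.toFinset ⊆ S.erase i →
      ‖affW u c l 0‖ ≤ K := fun i => ih _ (Finset.erase_ssubset i.2)
  choose K hK0 hK using key
  obtain ⟨r, hr0, hr1, hr⟩ := linear_contraction u hu S
  set A : ℝ := ∑ i, (K i + ‖affP (u i) (c i) 0‖) with hA
  have hAi : ∀ i : S, K i + ‖affP (u i) (c i) 0‖ ≤ A := fun i =>
    Finset.single_le_sum (f := fun i : S => K i + ‖affP (u i) (c i) 0‖)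
      (fun j _ => add_nonneg (hK0 j) (norm_nonneg _)) (Finset.mem_univ i)
  have hA0 : 0 ≤ A := Finset.sum_nonneg fun j _ => add_nonneg (hK0 j) (norm_nonneg _)
  have hr' : 0 < 1 - r := by linarith
  set M := A / (1 - r) with hM
  have hMA : M * (1 - r) = A := div_mul_cancel₀ _ hr'.ne'
  have hM0 : 0 ≤ M := div_nonneg hA0 hr'.le
  have hAM : A ≤ M := by nlinarith
  refine ⟨M, hM0, fun l => ?_⟩
  induction hn : l.length using Nat.strong_induction_on generalizing l with
  | _ n ihn =>
  intro hl
  by_cases hnil : l = []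
  · subst hnil; simpa [affW] using hM0
  by_cases hS : l.toFinset = S
  · obtain ⟨B, i, m, h1, h2, h3⟩ := list_split l hnil
    have hiS : i ∈ S := by rw [← hS, ← h3]; simp
    have hB : B.toFinset ⊆ S.erase i := by
      rw [← hS, ← h3, Finset.erase_insert (by simpa using h2)]
    have hmS : m.toFinset ⊆ S := by
      refine Finset.Subset.trans ?_ hl
      intro k hk
      rw [h1]; simp only [List.mem_toFinset] at hk; simp [hk]
    have hm := ihn m.length (by rw [← hn, h1]; simp; omega) m rfl hmS
    have hBi : (B ++ [i]).toFinset = S := by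
      rw [← hS, ← h3]; ext k; simp [or_comm]
    have e : affW u c l 0 = affW u c (B ++ [i]) (affW u c m 0) := by
      rw [← affW_append, h1]; simp
    have hmem : affW u c m 0 ∈ Submodule.span ℝ (u '' (S : Set ι)) := by
      refine affW_mem _ u c m (fun j hj => Submodule.subset_span
        (Set.mem_image_of_mem u (hmS (by simpa using hj)))) 0 (Submodule.zero_mem _)
    have b1 := hr (B ++ [i]) hBi _ hmem
    have d1 := affW_sub u c (B ++ [i]) (affW u c m 0) 0
    rw [sub_zero] at d1
    have d2 : affW u c (B ++ [i]) 0 = affW u c B (affP (u i) (c i) 0) := by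
      rw [affW_append]; rfl
    have d3 := affW_sub u c B (affP (u i) (c i) 0) 0
    rw [sub_zero] at d3
    have b2 := linW_norm_le u hu B (affP (u i) (c i) 0)
    have b3 := hK ⟨i, hiS⟩ B hB
    have b4 := hAi ⟨i, hiS⟩
    have b5 : affW u c l 0 = linW u (B ++ [i]) (affW u c m 0) +
        (linW u B (affP (u i) (c i) 0) + affW u c B 0) := by
      rw [e, ← d1, ← d3, d2]; abel
    have b6 := norm_add_le (linW u (B ++ [i]) (affW u c m 0))
      (linW u B (affP (u i) (c i) 0) + affW u c B 0)
    have b7 := norm_add_le (linW u B (affP (u i) (c i) 0)) (affW u c B 0)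
    have b8 : r * ‖affW u c m 0‖ ≤ r * M := mul_le_mul_of_nonneg_left hm hr0
    rw [b5]
    simp only at b4
    linarith
  · obtain ⟨i, hiS, hil⟩ : ∃ i ∈ S, i ∉ l.toFinset := by
      by_contra! hcon
      exact hS (Finset.Subset.antisymm hl hcon)
    have := hK ⟨i, hiS⟩ l (fun k hk => Finset.mem_erase.2
      ⟨fun hki => hil (by rw [hki] at hk; exact hk), hl hk⟩)
    have b4 := hAi ⟨i, hiS⟩
    have := norm_nonneg (affP (u i) (c i) 0)
    simp only at b4
    linarith

lemma nearest_eq (u : E) (hu : ‖u‖ = 1) (c : ℝ) (x p : E) (hp : ⟪p, u⟫_ℝ = c)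
    (hmin : ∀ y : E, ⟪y, u⟫_ℝ = c → dist x p ≤ dist x y) : p = affP u c x := by
  have huu : ⟪u, u⟫_ℝ = 1 := by rw [real_inner_self_eq_norm_sq, hu]; norm_num
  have hq : ⟪affP u c x, u⟫_ℝ = c := by
    unfold affP
    rw [inner_sub_left, real_inner_smul_left, huu]; ring
  have h1 := hmin _ hq
  rw [dist_eq_norm, dist_eq_norm] at h1
  have h2 : x - p = (x - affP u c x) + (affP u c x - p) := by abel
  have h3 : ⟪x - affP u c x, affP u c x - p⟫_ℝ = 0 := by
    have : x - affP u c x = (⟪x, u⟫_ℝ - c) • u := by unfold affP; abel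
    rw [this, real_inner_comm, real_inner_smul_right, inner_sub_left, hq, hp]; ring
  have h4 : ‖x - p‖ ^ 2 = ‖x - affP u c x‖ ^ 2 + ‖affP u c x - p‖ ^ 2 := by
    rw [h2, norm_add_sq_real, h3]; ring
  have h5 : ‖affP u c x - p‖ ^ 2 ≤ 0 := by
    nlinarith [norm_nonneg (x - p)]
  have h6 : ‖affP u c x - p‖ = 0 := by nlinarith [norm_nonneg (affP u c x - p)]
  exact (sub_eq_zero.1 (norm_eq_zero.1 h6)).symm

end ProjectionWords

/-- Given hyperplanes `h_1, …, h_n` in `ℝ^d` and the orthogonal projections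
`π_1, …, π_n` onto them (characterized as nearest-point maps), there is a compact
convex set `P` with nonempty interior that is stable under all the projections. -/
theorem exists_projection_stable_body (d n : ℕ) (hd : 1 ≤ d)
    (h : Fin n → Set (EuclideanSpace ℝ (Fin d)))
    (hh : ∀ i, IsHyperplane (h i))
    (π : Fin n → EuclideanSpace ℝ (Fin d) → EuclideanSpace ℝ (Fin d))
    (hπ : ∀ i x, π i x ∈ h i ∧ ∀ y ∈ h i, dist x (π i x) ≤ dist x y) :
    ∃ P : Set (EuclideanSpace ℝ (Fin d)),
      IsCompact P ∧ Convex ℝ P ∧ (interior P).Nonempty ∧ ∀ i, π i '' P ⊆ P := by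
  classical
  have hex : ∀ i, ∃ (w : EuclideanSpace ℝ (Fin d)) (c : ℝ), ‖w‖ = 1 ∧
      h i = {y | ⟪y, w⟫_ℝ = c} := by
    intro i
    obtain ⟨v, c, hv, he⟩ := hh i
    have hv' : ‖v‖ ≠ 0 := norm_ne_zero_iff.2 hv
    refine ⟨‖v‖⁻¹ • v, ‖v‖⁻¹ * c, ?_, ?_⟩
    · rw [norm_smul, norm_inv, norm_norm, inv_mul_cancel₀ hv']
    · rw [he]
      ext y
      simp only [Set.mem_ofPred_eq, real_inner_smul_right]
      exact (mul_right_inj' (inv_ne_zero hv')).symm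
  choose u c hu hc using hex
  have hπ' : ∀ i x, π i x = affP (u i) (c i) x := by
    intro i x
    obtain ⟨h1, h2⟩ := hπ i x
    rw [hc i] at h1 h2
    exact nearest_eq _ (hu i) _ _ _ h1 h2
  obtain ⟨K, hK0, hK⟩ := affine_bounded u c hu Finset.univ
  let O : Set (EuclideanSpace ℝ (Fin d)) :=
    {y | ∃ l : List (Fin n), ∃ x, ‖x‖ ≤ 1 ∧ y = affW u c l x}
  have hO : O ⊆ Metric.closedBall 0 (1 + K) := by
    rintro y ⟨l, x, hx, rfl⟩
    rw [mem_closedBall_zero_iff]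
    have e := affW_sub u c l x 0
    rw [sub_zero] at e
    rw [← sub_add_cancel (affW u c l x) (affW u c l 0), e]
    exact (norm_add_le _ _).trans
      (add_le_add ((linW_norm_le u hu l x).trans hx) (hK l (Finset.subset_univ _)))
  refine ⟨closure (convexHull ℝ O), ?_, (convex_convexHull ℝ O).closure, ?_, ?_⟩
  · refine Metric.isCompact_of_isClosed_isBounded isClosed_closure ?_
    exact (isBounded_convexHull.2 (Metric.isBounded_closedBall.subset hO)).closure
  · refine ⟨0, mem_interior.2 ⟨Metric.ball 0 1, ?_, Metric.isOpen_ball, by simp⟩⟩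
    intro x hx
    refine subset_closure (subset_convexHull ℝ O ⟨[], x, ?_, rfl⟩)
    exact (mem_ball_zero_iff.1 hx).le
  · intro i
    rw [Set.image_subset_iff]
    have hcv : Convex ℝ (π i ⁻¹' closure (convexHull ℝ O)) := by
      intro x hx y hy s t hs ht hst
      have e : π i (s • x + t • y) = s • π i x + t • π i y := by
        simp only [hπ', affP]
        rw [inner_add_left, real_inner_smul_left, real_inner_smul_left]
        have : t = 1 - s := by linarith
        subst this
        module
      change π i (s • x + t • y) ∈ closure (convexHull ℝ O)
      rw [e]
      exact (convex_convexHull ℝ O).closure hx hy hs ht hst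
    have hct : Continuous (π i) := by
      have : π i = affP (u i) (c i) := funext (hπ' i)
      rw [this]; unfold affP; fun_prop
    refine closure_minimal (convexHull_min ?_ hcv) (isClosed_closure.preimage hct)
    rintro y ⟨l, x, hx, rfl⟩
    refine subset_closure (subset_convexHull ℝ O ⟨i :: l, x, hx, ?_⟩)
    rw [hπ']; rfl
end

section
/- Let P be a compact topological space and let {μ_p}_{p∈P} be a family of probability measures on ℝ^d, each absolutely continuous with respect to Lebesgue measure, depending continuously on p, and with all supports contained in a single compact set. Then for every ε > 0 there exists δ > 0 such that for every layer L of width less than δ and every p ∈ P one has μ_p(L) < ε. -/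
open scoped InnerProductSpace ENNReal
open MeasureTheory

open Filter Topology in
lemma layer_hyperplane_null {d : ℕ} (u : EuclideanSpace ℝ (Fin d)) (hu : ‖u‖ = 1) (a : ℝ) :
    volume {x : EuclideanSpace ℝ (Fin d) | ⟪x, u⟫_ℝ = a} = 0 := by
  have huu : ⟪u, u⟫_ℝ = 1 := by rw [real_inner_self_eq_norm_sq, hu]; norm_num
  set H : AffineSubspace ℝ (EuclideanSpace ℝ (Fin d)) :=
    AffineSubspace.mk' (a • u) (LinearMap.ker (innerSL ℝ u).toLinearMap) with hH
  have hmem : ∀ x, x ∈ H ↔ ⟪x, u⟫_ℝ = a := by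
    intro x
    rw [hH, AffineSubspace.mem_mk']
    simp only [vsub_eq_sub, LinearMap.mem_ker, ContinuousLinearMap.coe_coe, innerSL_apply_apply,
      inner_sub_right, inner_smul_right, huu]
    rw [real_inner_comm]
    constructor <;> intro h <;> linarith
  have hne : H ≠ ⊤ := by
    intro h
    have : (a + 1) • u ∈ H := by rw [h]; trivial
    rw [hmem, real_inner_smul_left, huu] at this
    linarith
  have := Measure.addHaar_affineSubspace (volume : Measure (EuclideanSpace ℝ (Fin d))) H hne
  convert this using 2
  ext x
  exact (hmem x).symm

open Filter Topology in
lemma layer_open_small {d : ℕ} (ν : Measure (EuclideanSpace ℝ (Fin d))) [IsProbabilityMeasure ν]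
    (hac : ν ≪ volume) (u : EuclideanSpace ℝ (Fin d)) (hu : ‖u‖ = 1) (a : ℝ)
    (ε : ℝ≥0∞) (hε : 0 < ε) :
    ∃ η > (0 : ℝ), ν {x | |⟪x, u⟫_ℝ - a| < η} < ε := by
  have key := tendsto_measure_biInter_gt (μ := ν) (a := (0 : ℝ))
    (s := fun η : ℝ => {x : EuclideanSpace ℝ (Fin d) | |⟪x, u⟫_ℝ - a| < η})
    (fun r _ => (measurableSet_lt (by fun_prop) measurable_const).nullMeasurableSet)
    (fun i j _ hij x hx => lt_of_lt_of_le hx hij) ⟨1, one_pos, measure_ne_top _ _⟩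
  have h0 : ν (⋂ r > (0 : ℝ), {x : EuclideanSpace ℝ (Fin d) | |⟪x, u⟫_ℝ - a| < r}) = 0 := by
    refine measure_mono_null ?_ (hac (layer_hyperplane_null u hu a))
    intro x hx
    simp only [Set.mem_iInter, Set.mem_setOf_eq] at hx ⊢
    by_contra hne
    exact lt_irrefl _ (hx _ (abs_pos.2 (sub_ne_zero.2 hne)))
  rw [h0] at key
  obtain ⟨η, h1, h2⟩ := ((key.eventually (gt_mem_nhds hε)).and self_mem_nhdsWithin).exists
  exact ⟨η, h2, h1⟩

/-- Uniform smallness of layers: for a family of absolutely continuous probability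
measures on `ℝ^d`, parameterized by a compact space, depending continuously on the
parameter, with all supports in a single compact set, and any `ε > 0`, there is
`δ > 0` such that every layer of width `< δ` has measure `< ε` for all parameters. -/
theorem layer_measure_small (d : ℕ) {P : Type*} [TopologicalSpace P] [CompactSpace P]
    (μ : P → Measure (EuclideanSpace ℝ (Fin d)))
    (hprob : ∀ p, IsProbabilityMeasure (μ p))
    (hac : ∀ p, μ p ≪ volume)
    (hcont : ∀ U : Set (EuclideanSpace ℝ (Fin d)), IsOpen U →
      Continuous fun p => μ p U)
    (K : Set (EuclideanSpace ℝ (Fin d))) (hK : IsCompact K)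
    (hsupp : ∀ p, μ p Kᶜ = 0)
    (ε : ℝ) (hε : 0 < ε) :
    ∃ δ > (0 : ℝ), ∀ (u : EuclideanSpace ℝ (Fin d)) (a b : ℝ),
      ‖u‖ = 1 → a ≤ b → b - a < δ → ∀ p,
        μ p {x | a ≤ ⟪x, u⟫_ℝ ∧ ⟪x, u⟫_ℝ ≤ b} < ENNReal.ofReal ε := by
  have hε' : 0 < ENNReal.ofReal ε := ENNReal.ofReal_pos.2 hε
  obtain ⟨R, hR0, hR⟩ : ∃ R > (0 : ℝ), ∀ x ∈ K, ‖x‖ ≤ R := hK.isBounded.exists_pos_norm_le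
  have hnull : ∀ p (S : Set (EuclideanSpace ℝ (Fin d))) , μ p S ≤ μ p (S ∩ K) := by
    intro p S
    calc μ p S ≤ μ p (S ∩ K ∪ Kᶜ) := measure_mono (fun x hx => by
          by_cases h : x ∈ K
          · exact Or.inl ⟨hx, h⟩
          · exact Or.inr h)
      _ ≤ μ p (S ∩ K) + μ p Kᶜ := measure_union_le _ _
      _ = μ p (S ∩ K) := by rw [hsupp, add_zero]
  have hC : IsCompact ((Set.univ : Set P) ×ˢ
      (Metric.sphere (0 : EuclideanSpace ℝ (Fin d)) 1 ×ˢ Set.Icc (-R - 1) R)) :=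
    isCompact_univ.prod ((isCompact_sphere _ _).prod isCompact_Icc)
  have hev := hC.eventually_forall_of_forall_eventually (x₀ := (0 : ℝ))
    (P := fun δ y => μ y.1 {x | y.2.2 ≤ ⟪x, y.2.1⟫_ℝ ∧ ⟪x, y.2.1⟫_ℝ ≤ y.2.2 + δ}
      < ENNReal.ofReal ε) (by
    rintro ⟨p₀, u₀, a₀⟩ ⟨-, hu₀, -⟩
    have hu₀ : ‖u₀‖ = 1 := by simpa using hu₀
    haveI := hprob p₀
    obtain ⟨η, hη, hlt⟩ := layer_open_small (μ p₀) (hac p₀) u₀ hu₀ a₀ _ hε'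
    have hU : IsOpen {x : EuclideanSpace ℝ (Fin d) | |⟪x, u₀⟫_ℝ - a₀| < η} :=
      isOpen_lt (by fun_prop) continuous_const
    have e1 : ∀ᶠ z : ℝ × P × EuclideanSpace ℝ (Fin d) × ℝ in nhds (0, p₀, u₀, a₀),
        μ z.2.1 {x : EuclideanSpace ℝ (Fin d) | |⟪x, u₀⟫_ℝ - a₀| < η} < ENNReal.ofReal ε :=
      ((hcont _ hU).comp (continuous_fst.comp continuous_snd)).continuousAt.eventually
        (gt_mem_nhds hlt)
    have c2 : Continuous fun z : ℝ × P × EuclideanSpace ℝ (Fin d) × ℝ =>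
        |z.1| + |z.2.2.2 - a₀| + R * ‖z.2.2.1 - u₀‖ := by fun_prop
    have e2 : ∀ᶠ z : ℝ × P × EuclideanSpace ℝ (Fin d) × ℝ in nhds (0, p₀, u₀, a₀),
        |z.1| + |z.2.2.2 - a₀| + R * ‖z.2.2.1 - u₀‖ < η :=
      c2.continuousAt.eventually (gt_mem_nhds (by simpa using hη))
    filter_upwards [e1, e2]
    rintro ⟨δ, p, u, a⟩ h1 h2
    refine lt_of_le_of_lt ((hnull _ _).trans (measure_mono ?_)) h1
    rintro x ⟨⟨hx1, hx2⟩, hxK⟩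
    simp only [Set.mem_setOf_eq] at hx1 hx2 h2 ⊢
    have h3 : |⟪x, u - u₀⟫_ℝ| ≤ R * ‖u - u₀‖ :=
      (abs_real_inner_le_norm _ _).trans (mul_le_mul_of_nonneg_right (hR x hxK) (norm_nonneg _))
    rw [inner_sub_right] at h3
    have := abs_le.1 h3
    have := le_abs_self δ
    have := abs_nonneg δ
    have := le_abs_self (a - a₀)
    have := neg_abs_le (a - a₀)
    rw [abs_lt]
    constructor <;> linarith)
  obtain ⟨r, hr, hball⟩ := Metric.eventually_nhds_iff.1 hev
  have hm : 0 < min (r / 2) 1 := by positivity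
  refine ⟨min (r / 2) 1, hm, ?_⟩
  intro u a b hu hab hbd p
  have hb1 : b - a < 1 := hbd.trans_le (min_le_right _ _)
  by_cases ha : a ∈ Set.Icc (-R - 1) R
  · have hd : dist (min (r / 2) 1) 0 < r := by
      rw [Real.dist_eq, sub_zero, abs_of_pos hm]
      exact (min_le_left _ _).trans_lt (by linarith)
    have := hball hd (p, u, a) ⟨trivial, by simpa using hu, ha⟩
    refine lt_of_le_of_lt (measure_mono ?_) this
    rintro x ⟨h1, h2⟩
    exact ⟨h1, by simp only; linarith⟩
  · refine lt_of_le_of_lt (hnull _ _) ?_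
    convert hε'
    convert measure_empty (μ := μ p)
    rw [Set.eq_empty_iff_forall_notMem]
    rintro x ⟨⟨h1, h2⟩, hxK⟩
    have h3 := abs_real_inner_le_norm x u
    rw [hu, mul_one] at h3
    have h4 := abs_le.1 (h3.trans (hR x hxK))
    exact ha ⟨by linarith, by linarith⟩
end

section
/- Let P be a topological space with a countable base and let {μ_p}_{p∈P} be a family of probability measures on ℝ^d, each absolutely continuous with respect to Lebesgue measure, depending continuously on p, and with all supports contained in a single compact set. Parameterize closed halfspaces by pairs (u, c) ∈ S^{d−1} × ℝ via H(u,c) = {x ∈ ℝ^d : ⟨x, u⟩ ≥ c}. Then the function (p, u, c) ↦ μ_p(H(u,c)) is continuous on P × S^{d−1} × ℝ. -/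
open scoped InnerProductSpace ENNReal
open MeasureTheory

theorem hyperplane_null (d : ℕ) (u : EuclideanSpace ℝ (Fin d)) (hu : ‖u‖ = 1) (c : ℝ) :
    (volume : Measure (EuclideanSpace ℝ (Fin d))) {x | ⟪x, u⟫_ℝ = c} = 0 := by
  have huu : ⟪u, u⟫_ℝ = 1 := by rw [real_inner_self_eq_norm_sq, hu]; norm_num
  let s : AffineSubspace ℝ (EuclideanSpace ℝ (Fin d)) :=
    AffineSubspace.mk' (c • u) (LinearMap.ker (innerₛₗ ℝ u))
  have hmem : ∀ x, x ∈ s ↔ ⟪x, u⟫_ℝ = c := by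
    intro x
    simp only [s, AffineSubspace.mem_mk', LinearMap.mem_ker, innerₛₗ_apply_apply, vsub_eq_sub,
      inner_sub_right, real_inner_smul_right, huu, mul_one, sub_eq_zero, real_inner_comm]
  have hs : s ≠ ⊤ := by
    intro h
    have h1 : (c + 1) • u ∈ s := by rw [h]; trivial
    rw [hmem, real_inner_smul_left, huu] at h1
    linarith
  have := Measure.addHaar_affineSubspace (volume : Measure (EuclideanSpace ℝ (Fin d))) s hs
  have he : (s : Set (EuclideanSpace ℝ (Fin d))) = {x | ⟪x, u⟫_ℝ = c} := by
    ext x; exact hmem x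
  rwa [he] at this

/-- Continuity of halfspace measures: for a family of absolutely continuous
probability measures on `ℝ^d`, depending continuously on a parameter from a
second-countable space, with all supports in a single compact set, the measure of the
closed halfspace `{x | ⟪x,u⟫ ≥ c}` is jointly continuous in the parameter and in the
halfspace `(u, c) ∈ S^{d-1} × ℝ`. -/
theorem halfspace_measure_continuous (d : ℕ) {P : Type*} [TopologicalSpace P]
    [SecondCountableTopology P]
    (μ : P → Measure (EuclideanSpace ℝ (Fin d)))
    (hprob : ∀ p, IsProbabilityMeasure (μ p))
    (hac : ∀ p, μ p ≪ volume)
    (hcont : ∀ U : Set (EuclideanSpace ℝ (Fin d)), IsOpen U →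
      Continuous fun p => μ p U)
    (K : Set (EuclideanSpace ℝ (Fin d))) (hK : IsCompact K)
    (hsupp : ∀ p, μ p Kᶜ = 0) :
    Continuous fun q : P × Metric.sphere (0 : EuclideanSpace ℝ (Fin d)) 1 × ℝ =>
      μ q.1 {x | q.2.2 ≤ ⟪x, (q.2.1 : EuclideanSpace ℝ (Fin d))⟫_ℝ} := by
  rw [continuous_iff_continuousAt]
  rintro ⟨p₀, u₀, c₀⟩
  have hop : ∀ t : ℝ, IsOpen {x : EuclideanSpace ℝ (Fin d) | t < ⟪x, (u₀ : EuclideanSpace ℝ (Fin d))⟫_ℝ} :=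
    fun t => isOpen_lt continuous_const (by fun_prop)
  have hu₀ : ‖(u₀ : EuclideanSpace ℝ (Fin d))‖ = 1 := by simp
  have hδ := tendsto_one_div_add_atTop_nhds_zero_nat (𝕜 := ℝ)
  obtain ⟨R, hR⟩ := hK.isBounded.exists_norm_le
  -- closeness of the affine functionals on `K`
  have hclose : ∀ δ : ℝ, 0 < δ →
      ∀ᶠ q : P × Metric.sphere (0 : EuclideanSpace ℝ (Fin d)) 1 × ℝ in nhds (p₀, u₀, c₀),
        ∀ x ∈ K, |(⟪x, (q.2.1 : EuclideanSpace ℝ (Fin d))⟫_ℝ - q.2.2) -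
          (⟪x, (u₀ : EuclideanSpace ℝ (Fin d))⟫_ℝ - c₀)| < δ := by
    intro δ hδ
    have hc : Continuous fun q : P × Metric.sphere (0 : EuclideanSpace ℝ (Fin d)) 1 × ℝ =>
        R * ‖(q.2.1 : EuclideanSpace ℝ (Fin d)) - u₀‖ + |q.2.2 - c₀| := by fun_prop
    have h := (hc.tendsto (p₀, u₀, c₀)).eventually_lt_const (u := δ) (by simpa using hδ)
    filter_upwards [h] with q hq x hx
    refine lt_of_le_of_lt ?_ hq
    have e : (⟪x, (q.2.1 : EuclideanSpace ℝ (Fin d))⟫_ℝ - q.2.2) -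
          (⟪x, (u₀ : EuclideanSpace ℝ (Fin d))⟫_ℝ - c₀) =
        ⟪x, (q.2.1 : EuclideanSpace ℝ (Fin d)) - u₀⟫_ℝ - (q.2.2 - c₀) := by
      rw [inner_sub_right]; ring
    rw [e]
    refine (abs_sub _ _).trans ?_
    gcongr
    refine (abs_real_inner_le_norm _ _).trans ?_
    gcongr
    exact hR x hx
  have hle : ∀ p, ∀ A B : Set (EuclideanSpace ℝ (Fin d)), (∀ x ∈ K, x ∈ A → x ∈ B) →
      μ p A ≤ μ p B := by
    intro p A B h
    apply measure_mono_ae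
    have : ∀ᵐ x ∂(μ p), x ∈ K := hsupp p
    filter_upwards [this] with x hx hA using h x hx hA
  have hev : ∀ t : ℝ, Filter.Tendsto
      (fun q : P × Metric.sphere (0 : EuclideanSpace ℝ (Fin d)) 1 × ℝ =>
        μ q.1 {x | t < ⟪x, (u₀ : EuclideanSpace ℝ (Fin d))⟫_ℝ}) (nhds (p₀, u₀, c₀))
      (nhds (μ p₀ {x | t < ⟪x, (u₀ : EuclideanSpace ℝ (Fin d))⟫_ℝ})) := fun t =>
    ((hcont _ (hop t)).comp continuous_fst).tendsto (p₀, u₀, c₀)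
  refine tendsto_order.2 ⟨fun a ha => ?_, fun a ha => ?_⟩
  · have hH : μ p₀ {x | c₀ ≤ ⟪x, (u₀ : EuclideanSpace ℝ (Fin d))⟫_ℝ} ≤
        μ p₀ (⋃ n : ℕ, {x | c₀ + 1 / ((n : ℝ) + 1) < ⟪x, (u₀ : EuclideanSpace ℝ (Fin d))⟫_ℝ}) := by
      apply measure_mono_ae
      have h0 : ∀ᵐ x ∂(μ p₀), ¬ ⟪x, (u₀ : EuclideanSpace ℝ (Fin d))⟫_ℝ = c₀ := by
        rw [ae_iff]
        simpa using hac p₀ (hyperplane_null d u₀ hu₀ c₀)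
      filter_upwards [h0] with x hx hA
      have hA' : c₀ ≤ ⟪x, (u₀ : EuclideanSpace ℝ (Fin d))⟫_ℝ := hA
      have hlt := lt_of_le_of_ne hA' (Ne.symm hx)
      obtain ⟨n, hn⟩ := exists_nat_one_div_lt (sub_pos.2 hlt)
      exact Set.mem_iUnion.2 ⟨n, by simp only [Set.mem_ofPred_eq]; linarith⟩
    have hmono : Monotone fun n : ℕ =>
        {x | c₀ + 1 / ((n : ℝ) + 1) < ⟪x, (u₀ : EuclideanSpace ℝ (Fin d))⟫_ℝ} := by
      intro m n hmn x hx
      have := Nat.one_div_le_one_div (α := ℝ) hmn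
      have hx' : c₀ + 1 / ((m : ℝ) + 1) < ⟪x, (u₀ : EuclideanSpace ℝ (Fin d))⟫_ℝ := hx
      simp only [Set.mem_ofPred_eq]
      linarith
    have ht := tendsto_measure_iUnion_atTop (μ := μ p₀) hmono
    obtain ⟨n, hn⟩ := (ht.eventually_const_lt (lt_of_lt_of_le ha hH)).exists
    have hpos : 0 < 1 / ((n : ℝ) + 1) := Nat.one_div_pos_of_nat
    filter_upwards [(hev (c₀ + 1 / ((n : ℝ) + 1))).eventually_const_lt hn, hclose _ hpos]
      with q h1 h2
    refine lt_of_lt_of_le h1 (hle _ _ _ fun x hx hA => ?_)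
    have h3 := (abs_lt.1 (h2 x hx)).1
    have hA' : c₀ + 1 / ((n : ℝ) + 1) < ⟪x, (u₀ : EuclideanSpace ℝ (Fin d))⟫_ℝ := hA
    simp only [Set.mem_ofPred_eq]
    linarith
  · have hH : μ p₀ (⋂ n : ℕ, {x | c₀ - 1 / ((n : ℝ) + 1) < ⟪x, (u₀ : EuclideanSpace ℝ (Fin d))⟫_ℝ})
        ≤ μ p₀ {x | c₀ ≤ ⟪x, (u₀ : EuclideanSpace ℝ (Fin d))⟫_ℝ} := by
      apply measure_mono
      intro x hx
      by_contra hlt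
      have hlt' : ⟪x, (u₀ : EuclideanSpace ℝ (Fin d))⟫_ℝ < c₀ := not_le.1 hlt
      obtain ⟨n, hn⟩ := exists_nat_one_div_lt (sub_pos.2 hlt')
      have h4 : c₀ - 1 / ((n : ℝ) + 1) < ⟪x, (u₀ : EuclideanSpace ℝ (Fin d))⟫_ℝ :=
        Set.mem_iInter.1 hx n
      linarith
    have hanti : Antitone fun n : ℕ =>
        {x | c₀ - 1 / ((n : ℝ) + 1) < ⟪x, (u₀ : EuclideanSpace ℝ (Fin d))⟫_ℝ} := by
      intro m n hmn x hx
      have := Nat.one_div_le_one_div (α := ℝ) hmn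
      have hx' : c₀ - 1 / ((n : ℝ) + 1) < ⟪x, (u₀ : EuclideanSpace ℝ (Fin d))⟫_ℝ := hx
      simp only [Set.mem_ofPred_eq]
      linarith
    have ht := tendsto_measure_iInter_atTop (μ := μ p₀)
      (fun n : ℕ => (hop (c₀ - 1 / ((n : ℝ) + 1))).measurableSet.nullMeasurableSet) hanti
      ⟨0, measure_ne_top _ _⟩
    obtain ⟨n, hn⟩ := (ht.eventually_lt_const (lt_of_le_of_lt hH ha)).exists
    have hpos : 0 < 1 / ((n : ℝ) + 1) := Nat.one_div_pos_of_nat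
    filter_upwards [(hev (c₀ - 1 / ((n : ℝ) + 1))).eventually_lt_const hn, hclose _ hpos]
      with q h1 h2
    refine lt_of_le_of_lt (hle _ _ _ fun x hx hA => ?_) h1
    have h3 := (abs_lt.1 (h2 x hx)).2
    have hA' : q.2.2 ≤ ⟪x, (q.2.1 : EuclideanSpace ℝ (Fin d))⟫_ℝ := hA
    simp only [Set.mem_ofPred_eq]
    linarith
end

section
/- Let P be a topological space with a countable base and let {μ_p}_{p∈P} be a family of probability measures on ℝ^d, each absolutely continuous with respect to Lebesgue measure, depending continuously on p, and with all supports contained in a single compact set. Define f_p(y) = min over all closed halfspaces H containing y of μ_p(H); equivalently f_p(y) = inf over unit vectors u of μ_p({x : ⟨x, u⟩ ≥ ⟨y, u⟩}). Then (p, y) ↦ f_p(y) is continuous on P × ℝ^d, and the infimum is attained. -/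
open scoped InnerProductSpace ENNReal
open MeasureTheory


lemma hyperplane_null_s9 {E : Type*} [NormedAddCommGroup E] [InnerProductSpace ℝ E]
    [FiniteDimensional ℝ E] [MeasurableSpace E] [BorelSpace E]
    (y u : E) (hu : u ≠ 0) : (volume : Measure E) {x | ⟪x, u⟫_ℝ = ⟪y, u⟫_ℝ} = 0 := by
  have h : {x : E | ⟪x, u⟫_ℝ = ⟪y, u⟫_ℝ} =
      (AffineSubspace.mk' y (Submodule.span ℝ {u})ᗮ : Set E) := by
    ext x
    simp only [Set.mem_ofPred_eq, SetLike.mem_coe, AffineSubspace.mem_mk', vsub_eq_sub,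
      Submodule.mem_orthogonal_singleton_iff_inner_left, inner_sub_left, sub_eq_zero]
  rw [h]
  apply Measure.addHaar_affineSubspace
  intro ht
  have hm : y + u ∈ AffineSubspace.mk' y (Submodule.span ℝ {u})ᗮ := by rw [ht]; trivial
  simp only [AffineSubspace.mem_mk', vsub_eq_sub, add_sub_cancel_left,
      Submodule.mem_orthogonal_singleton_iff_inner_left, inner_self_eq_zero] at hm
  exact hu hm

lemma joint_continuous {E : Type*} [NormedAddCommGroup E] [InnerProductSpace ℝ E]
    [FiniteDimensional ℝ E] [MeasurableSpace E] [BorelSpace E] {P : Type*}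
    [TopologicalSpace P] (μ : P → Measure E)
    (hprob : ∀ p, IsProbabilityMeasure (μ p))
    (hac : ∀ p, μ p ≪ volume)
    (hcont : ∀ U : Set E, IsOpen U → Continuous fun p => μ p U)
    (K : Set E) (hK : IsCompact K) (hsupp : ∀ p, μ p Kᶜ = 0) :
    Continuous fun q : (P × E) × Metric.sphere (0 : E) 1 =>
      μ q.1.1 {x | ⟪q.1.2, (q.2 : E)⟫_ℝ ≤ ⟪x, (q.2 : E)⟫_ℝ} := by
  rw [continuous_iff_continuousAt]
  rintro ⟨⟨p₀, y₀⟩, u₀⟩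
  have hu₀ : (u₀ : E) ≠ 0 := by
    intro h
    have := u₀.2
    simp [h] at this
  have hfst : Filter.Tendsto (fun q : (P × E) × Metric.sphere (0 : E) 1 => q.1.1)
      (nhds ((p₀, y₀), u₀)) (nhds p₀) :=
    (continuous_fst.comp continuous_fst).tendsto ((p₀, y₀), u₀)
  refine tendsto_order.2 ⟨fun a ha => ?_, fun a ha => ?_⟩
  · have hopen : IsOpen {x : E | ⟪y₀, (u₀ : E)⟫_ℝ < ⟪x, (u₀ : E)⟫_ℝ} :=
      isOpen_lt (by fun_prop) (by fun_prop)
    have ha' : a < μ p₀ {x : E | ⟪y₀, (u₀ : E)⟫_ℝ < ⟪x, (u₀ : E)⟫_ℝ} := by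
      refine lt_of_lt_of_le ha ?_
      have hn := hac p₀ (hyperplane_null_s9 y₀ (u₀ : E) hu₀)
      calc μ p₀ {x : E | ⟪y₀, (u₀ : E)⟫_ℝ ≤ ⟪x, (u₀ : E)⟫_ℝ}
          ≤ μ p₀ ({x : E | ⟪y₀, (u₀ : E)⟫_ℝ < ⟪x, (u₀ : E)⟫_ℝ} ∪
              {x | ⟪x, (u₀ : E)⟫_ℝ = ⟪y₀, (u₀ : E)⟫_ℝ}) := by
            apply measure_mono
            intro x hx
            rcases lt_or_eq_of_le (show ⟪y₀, (u₀ : E)⟫_ℝ ≤ ⟪x, (u₀ : E)⟫_ℝ from hx) with h | h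
            · exact Or.inl h
            · exact Or.inr h.symm
        _ ≤ _ := measure_union_le _ _
        _ = _ := by rw [hn, add_zero]
    obtain ⟨C, hCs, hC, haC⟩ := hopen.exists_lt_isCompact ha'
    have hCc : Continuous fun p => μ p C := by
      have : (fun p => μ p C) = fun p => 1 - μ p Cᶜ := by
        funext p
        have := hprob p
        rw [← prob_compl_eq_one_sub hC.measurableSet.compl, compl_compl]
      rw [this]
      exact ENNReal.continuous_sub_left ENNReal.one_ne_top |>.comp
        (hcont _ hC.isClosed.isOpen_compl)
    have h1 := hfst.eventually ((hCc.tendsto p₀).eventually (lt_mem_nhds haC))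
    have h2 : ∀ᶠ q : (P × E) × Metric.sphere (0 : E) 1 in nhds ((p₀, y₀), u₀),
        ∀ x ∈ C, ⟪q.1.2, (q.2 : E)⟫_ℝ < ⟪x, (q.2 : E)⟫_ℝ := by
      apply hC.eventually_forall_of_forall_eventually
      intro x hx
      exact (isOpen_lt (by fun_prop) (by fun_prop)).mem_nhds (hCs hx)
    filter_upwards [h1, h2] with q hq1 hq2
    exact lt_of_lt_of_le hq1 (measure_mono fun x hx => (hq2 x hx).le)
  · obtain ⟨U, hUs, hU, hUa⟩ := Set.exists_isOpen_lt_of_lt _ _ ha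
    have h1 := hfst.eventually (((hcont U hU).tendsto p₀).eventually (gt_mem_nhds hUa))
    have h2 : ∀ᶠ q : (P × E) × Metric.sphere (0 : E) 1 in nhds ((p₀, y₀), u₀),
        ∀ x ∈ K \ U, ⟪x, (q.2 : E)⟫_ℝ < ⟪q.1.2, (q.2 : E)⟫_ℝ := by
      apply (hK.diff hU).eventually_forall_of_forall_eventually
      intro x hx
      refine (isOpen_lt (by fun_prop) (by fun_prop)).mem_nhds ?_
      exact not_le.1 fun h : ⟪y₀, (u₀ : E)⟫_ℝ ≤ ⟪x, (u₀ : E)⟫_ℝ => hx.2 (hUs h)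
    filter_upwards [h1, h2] with q hq1 hq2
    refine lt_of_le_of_lt ?_ hq1
    calc μ q.1.1 {x | ⟪q.1.2, (q.2 : E)⟫_ℝ ≤ ⟪x, (q.2 : E)⟫_ℝ} ≤ μ q.1.1 (U ∪ Kᶜ) := by
          apply measure_mono
          intro x hx
          by_contra hn
          simp only [Set.mem_union, Set.mem_compl_iff, not_or, not_not] at hn
          exact absurd hx (not_le.2 (hq2 x ⟨hn.2, hn.1⟩))
      _ ≤ _ := measure_union_le _ _
      _ = _ := by rw [hsupp, add_zero]

/-- Continuity of the minimal halfspace measure: for a family of absolutely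
continuous probability measures on `ℝ^d` (`d ≥ 1`), depending continuously on a
parameter from a second-countable space, with all supports in a single compact set,
the function `f_p(y) = inf` over unit vectors `u` of `μ_p {x | ⟪x,u⟫ ≥ ⟪y,u⟫}`
(the minimum over closed halfspaces containing `y`) is jointly continuous in
`(p, y)`, and the infimum is attained. -/
theorem min_halfspace_measure_continuous (d : ℕ) (hd : 1 ≤ d) {P : Type*}
    [TopologicalSpace P] [SecondCountableTopology P]
    (μ : P → Measure (EuclideanSpace ℝ (Fin d)))
    (hprob : ∀ p, IsProbabilityMeasure (μ p))
    (hac : ∀ p, μ p ≪ volume)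
    (hcont : ∀ U : Set (EuclideanSpace ℝ (Fin d)), IsOpen U →
      Continuous fun p => μ p U)
    (K : Set (EuclideanSpace ℝ (Fin d))) (hK : IsCompact K)
    (hsupp : ∀ p, μ p Kᶜ = 0) :
    (Continuous fun q : P × EuclideanSpace ℝ (Fin d) =>
      ⨅ u : Metric.sphere (0 : EuclideanSpace ℝ (Fin d)) 1,
        μ q.1 {x | ⟪q.2, (u : EuclideanSpace ℝ (Fin d))⟫_ℝ ≤
          ⟪x, (u : EuclideanSpace ℝ (Fin d))⟫_ℝ}) ∧
    ∀ (p : P) (y : EuclideanSpace ℝ (Fin d)),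
      ∃ u : Metric.sphere (0 : EuclideanSpace ℝ (Fin d)) 1,
        μ p {x | ⟪y, (u : EuclideanSpace ℝ (Fin d))⟫_ℝ ≤
            ⟪x, (u : EuclideanSpace ℝ (Fin d))⟫_ℝ} =
          ⨅ v : Metric.sphere (0 : EuclideanSpace ℝ (Fin d)) 1,
            μ p {x | ⟪y, (v : EuclideanSpace ℝ (Fin d))⟫_ℝ ≤
              ⟪x, (v : EuclideanSpace ℝ (Fin d))⟫_ℝ} := by
  have hj := joint_continuous μ hprob hac hcont K hK hsupp
  have : Nontrivial (EuclideanSpace ℝ (Fin d)) := by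
    have : Nonempty (Fin d) := ⟨⟨0, hd⟩⟩
    infer_instance
  have : Nonempty (Metric.sphere (0 : EuclideanSpace ℝ (Fin d)) 1) :=
    (NormedSpace.sphere_nonempty.2 zero_le_one).to_subtype
  constructor
  · have h := isCompact_univ.continuous_sInf (K := (Set.univ :
      Set (Metric.sphere (0 : EuclideanSpace ℝ (Fin d)) 1)))
      (f := fun (q : P × EuclideanSpace ℝ (Fin d))
        (u : Metric.sphere (0 : EuclideanSpace ℝ (Fin d)) 1) =>
        μ q.1 {x | ⟪q.2, (u : EuclideanSpace ℝ (Fin d))⟫_ℝ ≤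
          ⟪x, (u : EuclideanSpace ℝ (Fin d))⟫_ℝ}) hj
    simpa only [Set.image_univ, sInf_range] using h
  · intro p y
    have hc : Continuous fun u : Metric.sphere (0 : EuclideanSpace ℝ (Fin d)) 1 =>
        μ p {x | ⟪y, (u : EuclideanSpace ℝ (Fin d))⟫_ℝ ≤
          ⟪x, (u : EuclideanSpace ℝ (Fin d))⟫_ℝ} :=
      hj.comp (Continuous.prodMk_right (p, y))
    obtain ⟨u, -, hu⟩ := isCompact_univ.exists_isMinOn Set.univ_nonempty hc.continuousOn
    exact ⟨u, le_antisymm (le_iInf fun v => hu (Set.mem_univ v)) (iInf_le _ u)⟩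
end

section
/- Let μ be a probability measure on ℝ^d, absolutely continuous with respect to Lebesgue measure, with compact support. Let cent μ = {x ∈ ℝ^d : every closed halfspace containing x has μ-measure at least 1/(d+1)}. Then cent μ is either a single point or a compact convex set with nonempty interior. -/
open scoped InnerProductSpace ENNReal
open MeasureTheory

/-- The set of central points of a measure `μ` on `ℝ^d`: points `x` such that every
closed halfspace containing `x` has `μ`-measure at least `1/(d+1)`. -/
def cent {d : ℕ} (μ : Measure (EuclideanSpace ℝ (Fin d))) :
    Set (EuclideanSpace ℝ (Fin d)) :=
  {x | ∀ (u : EuclideanSpace ℝ (Fin d)) (c : ℝ), ‖u‖ = 1 → c ≤ ⟪x, u⟫_ℝ →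
    1 / ((d : ℝ≥0∞) + 1) ≤ μ {y | c ≤ ⟪y, u⟫_ℝ}}

open Filter Topology

lemma aux_exists {d : ℕ} (μ : Measure (EuclideanSpace ℝ (Fin d)))
    [IsProbabilityMeasure μ] (K : Set (EuclideanSpace ℝ (Fin d))) (hsupp : μ Kᶜ = 0)
    {ι : Type*} (s : Finset ι) (B : ι → Set (EuclideanSpace ℝ (Fin d)))
    (h : ∑ i ∈ s, μ (B i) < 1) : ∃ y ∈ K, ∀ i ∈ s, y ∉ B i := by
  by_contra hcon
  push Not at hcon
  have h1 : (Set.univ : Set (EuclideanSpace ℝ (Fin d))) ⊆ Kᶜ ∪ ⋃ i ∈ s, B i := by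
    intro y _
    by_cases hy : y ∈ K
    · obtain ⟨i, hi, hyi⟩ := hcon y hy
      right
      simp only [Set.mem_iUnion]
      exact ⟨i, hi, hyi⟩
    · left; exact hy
  have h2 : (1 : ℝ≥0∞) ≤ ∑ i ∈ s, μ (B i) := by
    calc (1 : ℝ≥0∞) = μ Set.univ := measure_univ.symm
      _ ≤ μ (Kᶜ ∪ ⋃ i ∈ s, B i) := measure_mono h1
      _ ≤ μ Kᶜ + μ (⋃ i ∈ s, B i) := measure_union_le _ _
      _ = μ (⋃ i ∈ s, B i) := by rw [hsupp, zero_add]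
      _ ≤ _ := measure_biUnion_finset_le _ _
  exact absurd h (not_lt.mpr h2)

lemma delta_mul (d : ℕ) : ((d : ℝ≥0∞) + 1) * (1 / ((d : ℝ≥0∞) + 1)) = 1 := by
  apply ENNReal.mul_div_cancel
  · simp
  · simp

lemma delta_le_one (d : ℕ) : (1 / ((d : ℝ≥0∞) + 1)) ≤ 1 := by
  exact ENNReal.div_le_of_le_mul (by simp)

lemma delta_pos (d : ℕ) : 0 < (1 / ((d : ℝ≥0∞) + 1)) := by
  apply ENNReal.div_pos <;> simp

lemma delta_ne_top (d : ℕ) : (1 / ((d : ℝ≥0∞) + 1)) ≠ ⊤ :=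
  ne_top_of_le_ne_top ENNReal.one_ne_top (delta_le_one d)

lemma sum_lt_a {d : ℕ} {ι : Type*} (s : Finset ι) (f : ι → ℝ≥0∞) (hs : s.card ≤ d + 1)
    (hf : ∀ i ∈ s, f i < 1 / ((d : ℝ≥0∞) + 1)) : ∑ i ∈ s, f i < 1 := by
  rcases s.eq_empty_or_nonempty with rfl | hne
  · simp
  · calc ∑ i ∈ s, f i < ∑ i ∈ s, 1 / ((d : ℝ≥0∞) + 1) := ENNReal.sum_lt_sum_of_nonempty hne hf
      _ = s.card * (1 / ((d : ℝ≥0∞) + 1)) := by rw [Finset.sum_const, nsmul_eq_mul]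
      _ ≤ ((d : ℝ≥0∞) + 1) * (1 / ((d : ℝ≥0∞) + 1)) := by
        gcongr
        exact_mod_cast hs
      _ = 1 := delta_mul d

lemma sum_lt_b {d : ℕ} {ι : Type*} (s : Finset ι) (f : ι → ℝ≥0∞) (hs : s.card ≤ d)
    (hf : ∀ i ∈ s, f i ≤ 1 / ((d : ℝ≥0∞) + 1)) : ∑ i ∈ s, f i < 1 := by
  calc ∑ i ∈ s, f i ≤ ∑ i ∈ s, 1 / ((d : ℝ≥0∞) + 1) := Finset.sum_le_sum hf
      _ = s.card * (1 / ((d : ℝ≥0∞) + 1)) := by rw [Finset.sum_const, nsmul_eq_mul]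
      _ < ((d : ℝ≥0∞) + 1) * (1 / ((d : ℝ≥0∞) + 1)) := by
        apply ENNReal.mul_lt_mul_left (delta_pos d).ne' (delta_ne_top d)
        exact_mod_cast Nat.lt_succ_of_le hs
      _ = 1 := delta_mul d

lemma mem_cent_iff {d : ℕ} (μ : Measure (EuclideanSpace ℝ (Fin d)))
    (x : EuclideanSpace ℝ (Fin d)) :
    x ∈ cent μ ↔ ∀ (u : EuclideanSpace ℝ (Fin d)) (c : ℝ), ‖u‖ = 1 →
      μ {y | c ≤ ⟪y, u⟫_ℝ} < 1 / ((d : ℝ≥0∞) + 1) → ⟪x, u⟫_ℝ < c := by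
  constructor
  · intro h u c hu hT
    by_contra hc
    exact absurd hT (not_lt.mpr (h u c hu (not_lt.mp hc)))
  · intro h u c hu hc
    by_contra hT
    exact absurd (h u c hu (not_le.mp hT)) (not_lt.mpr hc)

lemma meas_half {d : ℕ} (u : EuclideanSpace ℝ (Fin d)) (c : ℝ) :
    MeasurableSet {y : EuclideanSpace ℝ (Fin d) | c ≤ ⟪y, u⟫_ℝ} :=
  (isClosed_le continuous_const (by fun_prop)).measurableSet

lemma shrink {d : ℕ} (μ : Measure (EuclideanSpace ℝ (Fin d))) [IsProbabilityMeasure μ]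
    (u : EuclideanSpace ℝ (Fin d)) (c : ℝ) (a : ℝ≥0∞) (h : μ {y | c ≤ ⟪y, u⟫_ℝ} < a) :
    ∃ c' < c, μ {y | c' ≤ ⟪y, u⟫_ℝ} < a := by
  have h1 : Tendsto (fun n : ℕ => μ {y | c - 1 / ((n : ℝ) + 1) ≤ ⟪y, u⟫_ℝ}) atTop
      (𝓝 (μ (⋂ n : ℕ, {y | c - 1 / ((n : ℝ) + 1) ≤ ⟪y, u⟫_ℝ}))) := by
    apply tendsto_measure_iInter_atTop
    · intro n; exact (meas_half u _).nullMeasurableSet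
    · intro m n hmn y hy
      simp only [Set.mem_setOf_eq] at hy ⊢
      have : 1 / ((n : ℝ) + 1) ≤ 1 / ((m : ℝ) + 1) := Nat.one_div_le_one_div hmn
      linarith
    · exact ⟨0, measure_ne_top _ _⟩
  have h2 : (⋂ n : ℕ, {y : EuclideanSpace ℝ (Fin d) | c - 1 / ((n : ℝ) + 1) ≤ ⟪y, u⟫_ℝ})
      = {y | c ≤ ⟪y, u⟫_ℝ} := by
    ext y
    simp only [Set.mem_iInter, Set.mem_setOf_eq]
    constructor
    · intro hy
      have ht : Tendsto (fun n : ℕ => c - 1 / ((n : ℝ) + 1)) atTop (𝓝 (c - 0)) :=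
        tendsto_const_nhds.sub tendsto_one_div_add_atTop_nhds_zero_nat
      rw [sub_zero] at ht
      exact le_of_tendsto' ht hy
    · intro hy n
      have : 0 < 1 / ((n : ℝ) + 1) := Nat.one_div_pos_of_nat
      linarith
  rw [h2] at h1
  obtain ⟨n, hn⟩ := (h1.eventually (gt_mem_nhds h)).exists
  exact ⟨_, by have : 0 < 1 / ((n : ℝ) + 1) := Nat.one_div_pos_of_nat
               linarith, hn⟩

lemma mem_cent_iff_le {d : ℕ} (μ : Measure (EuclideanSpace ℝ (Fin d))) [IsProbabilityMeasure μ]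
    (x : EuclideanSpace ℝ (Fin d)) :
    x ∈ cent μ ↔ ∀ (u : EuclideanSpace ℝ (Fin d)) (c : ℝ), ‖u‖ = 1 →
      μ {y | c ≤ ⟪y, u⟫_ℝ} < 1 / ((d : ℝ≥0∞) + 1) → ⟪x, u⟫_ℝ ≤ c := by
  rw [mem_cent_iff]
  constructor
  · intro h u c hu hT
    exact (h u c hu hT).le
  · intro h u c hu hT
    obtain ⟨c', hc', hT'⟩ := shrink μ u c _ hT
    exact (h u c' hu hT').trans_lt hc'

lemma cent_isClosed {d : ℕ} (μ : Measure (EuclideanSpace ℝ (Fin d))) [IsProbabilityMeasure μ] :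
    IsClosed (cent μ) := by
  have : cent μ = ⋂ (u : EuclideanSpace ℝ (Fin d)), ⋂ (c : ℝ), ⋂ (_ : ‖u‖ = 1),
      ⋂ (_ : μ {y | c ≤ ⟪y, u⟫_ℝ} < 1 / ((d : ℝ≥0∞) + 1)), {x | ⟪x, u⟫_ℝ ≤ c} := by
    ext x
    rw [mem_cent_iff_le]
    simp only [Set.mem_iInter, Set.mem_setOf_eq]
  rw [this]
  refine isClosed_iInter fun u => isClosed_iInter fun c => isClosed_iInter fun _ =>
    isClosed_iInter fun _ => isClosed_le (by fun_prop) continuous_const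

lemma convex_half {E : Type*} [NormedAddCommGroup E] [InnerProductSpace ℝ E] (u : E) (c : ℝ) :
    Convex ℝ {x : E | ⟪x, u⟫_ℝ ≤ c} := by
  have := convex_halfSpace_le (𝕜 := ℝ) (f := fun x : E => ⟪x, u⟫_ℝ)
    ⟨fun x y => inner_add_left x y u, fun a x => by simp [inner_smul_left]⟩ c
  exact this

lemma convex_half_lt {E : Type*} [NormedAddCommGroup E] [InnerProductSpace ℝ E] (u : E) (c : ℝ) :
    Convex ℝ {x : E | ⟪x, u⟫_ℝ < c} := by
  have := convex_halfSpace_lt (𝕜 := ℝ) (f := fun x : E => ⟪x, u⟫_ℝ)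
    ⟨fun x y => inner_add_left x y u, fun a x => by simp [inner_smul_left]⟩ c
  exact this

lemma cent_convex {d : ℕ} (μ : Measure (EuclideanSpace ℝ (Fin d))) [IsProbabilityMeasure μ] :
    Convex ℝ (cent μ) := by
  have : cent μ = ⋂ (u : EuclideanSpace ℝ (Fin d)), ⋂ (c : ℝ), ⋂ (_ : ‖u‖ = 1),
      ⋂ (_ : μ {y | c ≤ ⟪y, u⟫_ℝ} < 1 / ((d : ℝ≥0∞) + 1)), {x | ⟪x, u⟫_ℝ ≤ c} := by
    ext x
    rw [mem_cent_iff_le]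
    simp only [Set.mem_iInter, Set.mem_setOf_eq]
  rw [this]
  exact convex_iInter fun u => convex_iInter fun c => convex_iInter fun _ =>
    convex_iInter fun _ => convex_half u c

lemma tail_zero {d : ℕ} (μ : Measure (EuclideanSpace ℝ (Fin d)))
    (K : Set (EuclideanSpace ℝ (Fin d))) (hsupp : μ Kᶜ = 0) (R : ℝ)
    (hR : ∀ y ∈ K, ‖y‖ ≤ R) (u : EuclideanSpace ℝ (Fin d)) (hu : ‖u‖ = 1) (c : ℝ) (hc : R < c) :
    μ {y | c ≤ ⟪y, u⟫_ℝ} = 0 := by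
  refine measure_mono_null ?_ hsupp
  intro y hy hyK
  have h1 := real_inner_le_norm y u
  rw [hu, mul_one] at h1
  have h2 := hR y hyK
  simp only [Set.mem_setOf_eq] at hy
  linarith

lemma tail_one {d : ℕ} (μ : Measure (EuclideanSpace ℝ (Fin d))) [IsProbabilityMeasure μ]
    (K : Set (EuclideanSpace ℝ (Fin d))) (hsupp : μ Kᶜ = 0) (R : ℝ)
    (hR : ∀ y ∈ K, ‖y‖ ≤ R) (u : EuclideanSpace ℝ (Fin d)) (hu : ‖u‖ = 1) (c : ℝ)
    (hT : μ {y | c ≤ ⟪y, u⟫_ℝ} < 1 / ((d : ℝ≥0∞) + 1)) : -R ≤ c := by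
  obtain ⟨y, hyK, hy⟩ := aux_exists μ K hsupp {()} (fun _ => {y | c ≤ ⟪y, u⟫_ℝ})
    (by simpa using hT.trans_le (delta_le_one d))
  have hy := hy () (by simp)
  simp only [Set.mem_setOf_eq, not_le] at hy
  have h1 := abs_real_inner_le_norm y u
  rw [hu, mul_one] at h1
  have h2 := hR y hyK
  have := neg_abs_le ⟪y, u⟫_ℝ
  linarith

lemma cent_isCompact {d : ℕ} (μ : Measure (EuclideanSpace ℝ (Fin d))) [IsProbabilityMeasure μ]
    (K : Set (EuclideanSpace ℝ (Fin d))) (hsupp : μ Kᶜ = 0) (R : ℝ) (hR0 : 0 ≤ R)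
    (hR : ∀ y ∈ K, ‖y‖ ≤ R) : IsCompact (cent μ) := by
  apply (isCompact_closedBall (0 : EuclideanSpace ℝ (Fin d)) R).of_isClosed_subset
    (cent_isClosed μ)
  intro x hx
  rw [mem_closedBall_zero_iff]
  by_contra hcon
  push Not at hcon
  have hpos : 0 < ‖x‖ := by linarith
  have hu : ‖(‖x‖⁻¹ • x)‖ = 1 := by
    rw [norm_smul, norm_inv, norm_norm, inv_mul_cancel₀ hpos.ne']
  have h := (mem_cent_iff μ x).1 hx (‖x‖⁻¹ • x) ‖x‖ hu (by
    rw [tail_zero μ K hsupp R hR _ hu _ hcon]; exact delta_pos d)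
  rw [inner_smul_right, real_inner_self_eq_norm_sq, pow_two, ← mul_assoc,
    inv_mul_cancel₀ hpos.ne', one_mul] at h
  exact lt_irrefl _ h

/-- Directions and thresholds of small tails. -/
def SmallTail {d : ℕ} (μ : Measure (EuclideanSpace ℝ (Fin d)))
    (p : EuclideanSpace ℝ (Fin d) × ℝ) : Prop :=
  ‖p.1‖ = 1 ∧ μ {y | p.2 ≤ ⟪y, p.1⟫_ℝ} < 1 / ((d : ℝ≥0∞) + 1)

lemma cent_nonempty {d : ℕ} (μ : Measure (EuclideanSpace ℝ (Fin d))) [IsProbabilityMeasure μ]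
    (K : Set (EuclideanSpace ℝ (Fin d))) (hsupp : μ Kᶜ = 0) (R : ℝ)
    (hR : ∀ y ∈ K, ‖y‖ ≤ R) : (cent μ).Nonempty := by
  obtain ⟨x, hx⟩ := Convex.helly_theorem_compact' (𝕜 := ℝ)
    (F := fun p : {p // SmallTail μ p} => {x | ⟪x, p.1.1⟫_ℝ ≤ p.1.2} ∩ Metric.closedBall 0 R)
    (fun p => (convex_half _ _).inter (convex_closedBall _ _))
    (fun p => (isCompact_closedBall _ _).inter_left
      (isClosed_le (by fun_prop) continuous_const))
    (by
      intro I hI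
      rw [finrank_euclideanSpace_fin] at hI
      obtain ⟨y, hyK, hy⟩ := aux_exists μ K hsupp I (fun p => {y | p.1.2 ≤ ⟪y, p.1.1⟫_ℝ})
        (sum_lt_a I _ hI (fun p _ => p.2.2))
      refine ⟨y, ?_⟩
      simp only [Set.mem_iInter]
      intro p hp
      have := hy p hp
      simp only [Set.mem_setOf_eq, not_le] at this
      exact ⟨this.le, by simpa using hR y hyK⟩)
  refine ⟨x, (mem_cent_iff_le μ x).2 fun u c hu hT => ?_⟩
  exact ((Set.mem_iInter.1 hx) ⟨(u, c), hu, hT⟩).1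

lemma interior_of {d : ℕ} (μ : Measure (EuclideanSpace ℝ (Fin d))) [IsProbabilityMeasure μ]
    (K : Set (EuclideanSpace ℝ (Fin d))) (hsupp : μ Kᶜ = 0) (R : ℝ)
    (hR : ∀ y ∈ K, ‖y‖ ≤ R) (ε : ℝ) (hε : 0 < ε) (y : EuclideanSpace ℝ (Fin d))
    (hy : ∀ p, SmallTail μ p → p.2 ≤ R + 1 → ⟪y, p.1⟫_ℝ ≤ p.2 - ε) :
    (interior (cent μ)).Nonempty := by
  refine ⟨y, mem_interior.2 ⟨Metric.ball y ε, ?_, Metric.isOpen_ball, Metric.mem_ball_self hε⟩⟩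
  intro z hz
  rw [mem_cent_iff]
  intro u c hu hT
  have h1 : ⟪z, u⟫_ℝ < ⟪y, u⟫_ℝ + ε := by
    have h := real_inner_le_norm (z - y) u
    rw [hu, mul_one, inner_sub_left] at h
    rw [Metric.mem_ball, dist_eq_norm] at hz
    linarith
  by_cases hc : c ≤ R + 1
  · have := hy (u, c) ⟨hu, hT⟩ hc
    simp only at this
    linarith
  · have := hy (u, R + 1) ⟨hu, by
      rw [tail_zero μ K hsupp R hR u hu _ (by simp)]; exact delta_pos d⟩ le_rfl
    simp only at this
    linarith

lemma exists_family {d : ℕ} (μ : Measure (EuclideanSpace ℝ (Fin d))) [IsProbabilityMeasure μ]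
    (K : Set (EuclideanSpace ℝ (Fin d))) (hsupp : μ Kᶜ = 0) (R : ℝ)
    (hR : ∀ y ∈ K, ‖y‖ ≤ R) (hint : ¬ (interior (cent μ)).Nonempty) (n : ℕ) :
    ∃ p : Fin (d + 1) → EuclideanSpace ℝ (Fin d) × ℝ,
      (∀ i, SmallTail μ (p i) ∧ (p i).2 ≤ R + 1) ∧
      ∀ y, ‖y‖ ≤ n → ∃ i, (p i).2 - 1 / ((n : ℝ) + 1) < ⟪y, (p i).1⟫_ℝ := by
  classical
  by_contra hcon
  push Not at hcon
  apply hint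
  obtain ⟨x, hx⟩ := Convex.helly_theorem_compact' (𝕜 := ℝ)
    (F := fun p : {p // SmallTail μ p ∧ p.2 ≤ R + 1} =>
      {x | ⟪x, p.1.1⟫_ℝ ≤ p.1.2 - 1 / ((n : ℝ) + 1)} ∩ Metric.closedBall 0 n)
    (fun p => (convex_half _ _).inter (convex_closedBall _ _))
    (fun p => (isCompact_closedBall _ _).inter_left
      (isClosed_le (by fun_prop) continuous_const))
    (by
      intro I hI
      rw [finrank_euclideanSpace_fin] at hI
      rcases I.eq_empty_or_nonempty with rfl | hne
      · simp
      obtain ⟨p0, hp0⟩ := hne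
      -- enumerate
      let e := I.equivFin
      let q : Fin (d + 1) → {p // SmallTail μ p ∧ p.2 ≤ R + 1} := fun i =>
        if h : (i : ℕ) < I.card then (e.symm ⟨i, h⟩ : I).1 else p0
      have hq : ∀ p ∈ I, ∃ i, q i = p := by
        intro p hp
        refine ⟨⟨e ⟨p, hp⟩, (e ⟨p, hp⟩).2.trans_le hI⟩, ?_⟩
        simp [q]
      obtain ⟨y, hyn, hy⟩ := hcon (fun i => (q i).1) (fun i => (q i).2)
      refine ⟨y, ?_⟩
      simp only [Set.mem_iInter]
      intro p hp
      obtain ⟨i, rfl⟩ := hq p hp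
      exact ⟨hy i, by simpa using hyn⟩)
  refine interior_of μ K hsupp R hR (1 / ((n : ℝ) + 1)) Nat.one_div_pos_of_nat x ?_
  intro p hp hpR
  exact ((Set.mem_iInter.1 hx) ⟨p, hp, hpR⟩).1

lemma hyper_null {d : ℕ} (μ : Measure (EuclideanSpace ℝ (Fin d))) (hac : μ ≪ volume)
    (u : EuclideanSpace ℝ (Fin d)) (hu : ‖u‖ = 1) (c : ℝ) : μ {y | ⟪y, u⟫_ℝ = c} = 0 := by
  apply hac
  let s : AffineSubspace ℝ (EuclideanSpace ℝ (Fin d)) :=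
    AffineSubspace.mk' (c • u) (LinearMap.ker (innerSL ℝ u).toLinearMap)
  have huu : ⟪u, u⟫_ℝ = 1 := by rw [real_inner_self_eq_norm_sq, hu]; norm_num
  have hs : (s : Set (EuclideanSpace ℝ (Fin d))) = {y | ⟪y, u⟫_ℝ = c} := by
    ext y
    simp only [s, SetLike.mem_coe, AffineSubspace.mem_mk', LinearMap.mem_ker, Set.mem_setOf_eq,
      vsub_eq_sub]
    simp only [ContinuousLinearMap.coe_coe, innerSL_apply_apply, inner_sub_right, inner_smul_right,
      huu, real_inner_comm]
    constructor <;> intro h <;> linarith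
  rw [← hs]
  apply Measure.addHaar_affineSubspace
  intro htop
  have h1 : ((c + 1) • u) ∈ {y : EuclideanSpace ℝ (Fin d) | ⟪y, u⟫_ℝ = c} := by
    rw [← hs, htop]; trivial
  simp only [Set.mem_setOf_eq, inner_smul_left, huu] at h1
  simp at h1

lemma tail_limit {d : ℕ} (μ : Measure (EuclideanSpace ℝ (Fin d))) (hac : μ ≪ volume)
    (a : ℝ≥0∞) (u : EuclideanSpace ℝ (Fin d)) (hu : ‖u‖ = 1) (c : ℝ)
    (p : ℕ → EuclideanSpace ℝ (Fin d) × ℝ) (hp : Tendsto p atTop (𝓝 (u, c)))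
    (h : ∀ n, μ {y | (p n).2 ≤ ⟪y, (p n).1⟫_ℝ} ≤ a) : μ {y | c ≤ ⟪y, u⟫_ℝ} ≤ a := by
  have h1 : {y | c ≤ ⟪y, u⟫_ℝ} ⊆ {y | ⟪y, u⟫_ℝ = c} ∪
      ⋃ N : ℕ, {y | ∀ n ≥ N, (p n).2 ≤ ⟪y, (p n).1⟫_ℝ} := by
    intro y hy
    rcases (show c ≤ ⟪y, u⟫_ℝ from hy).eq_or_lt with h0 | h0
    · left; exact h0.symm
    · right
      have ht1 : Tendsto (fun n => (p n).2) atTop (𝓝 c) :=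
        (continuous_snd.tendsto _).comp hp
      have ht2 : Tendsto (fun n => ⟪y, (p n).1⟫_ℝ) atTop (𝓝 ⟪y, u⟫_ℝ) :=
        tendsto_const_nhds.inner ((continuous_fst.tendsto _).comp hp)
      obtain ⟨N, hN⟩ := eventually_atTop.1 (ht1.eventually_lt ht2 h0)
      exact Set.mem_iUnion.2 ⟨N, fun n hn => (hN n hn).le⟩
  have hmono : Monotone fun N : ℕ => {y | ∀ n ≥ N, (p n).2 ≤ ⟪y, (p n).1⟫_ℝ} := by
    intro M N hMN y hy n hn
    exact hy n (le_trans hMN hn)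
  calc μ {y | c ≤ ⟪y, u⟫_ℝ} ≤ _ := measure_mono h1
    _ ≤ _ := measure_union_le _ _
    _ = μ (⋃ N : ℕ, {y | ∀ n ≥ N, (p n).2 ≤ ⟪y, (p n).1⟫_ℝ}) := by
      rw [hyper_null μ hac u hu c, zero_add]
    _ = ⨆ N : ℕ, μ {y | ∀ n ≥ N, (p n).2 ≤ ⟪y, (p n).1⟫_ℝ} := hmono.measure_iUnion
    _ ≤ a := iSup_le fun N => le_trans (measure_mono (t := {y | (p N).2 ≤ ⟪y, (p N).1⟫_ℝ})
      fun y (hy : ∀ n ≥ N, (p n).2 ≤ ⟪y, (p n).1⟫_ℝ) => hy N le_rfl) (h N)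

lemma limit_family {d : ℕ} (μ : Measure (EuclideanSpace ℝ (Fin d))) [IsProbabilityMeasure μ]
    (hac : μ ≪ volume)
    (K : Set (EuclideanSpace ℝ (Fin d))) (hsupp : μ Kᶜ = 0) (R : ℝ)
    (hR : ∀ y ∈ K, ‖y‖ ≤ R) (hint : ¬ (interior (cent μ)).Nonempty) :
    ∃ p : Fin (d + 1) → EuclideanSpace ℝ (Fin d) × ℝ,
      (∀ i, μ {y | (p i).2 ≤ ⟪y, (p i).1⟫_ℝ} ≤ 1 / ((d : ℝ≥0∞) + 1)) ∧
      (∀ y, ∃ i, (p i).2 ≤ ⟪y, (p i).1⟫_ℝ) ∧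
      (∀ x ∈ cent μ, ∀ i, ⟪x, (p i).1⟫_ℝ ≤ (p i).2) := by
  choose p hp hpc using exists_family μ K hsupp R hR hint
  have hcomp : IsCompact (Set.univ.pi fun _ : Fin (d + 1) =>
      (Metric.sphere (0 : EuclideanSpace ℝ (Fin d)) 1 ×ˢ Set.Icc (-R) (R + 1))) :=
    isCompact_univ_pi fun _ => (isCompact_sphere _ _).prod isCompact_Icc
  obtain ⟨q, hq, φ, hφ, hlim⟩ := hcomp.tendsto_subseq (x := p) (by
    intro n i _
    refine ⟨by simpa using (hp n i).1.1, ?_, (hp n i).2⟩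
    exact tail_one μ K hsupp R hR _ (hp n i).1.1 _ (hp n i).1.2)
  have hlim' : ∀ i, Tendsto (fun n => p (φ n) i) atTop (𝓝 (q i)) := fun i =>
    (tendsto_pi_nhds.1 hlim) i
  have hl1 : ∀ i, Tendsto (fun n => (p (φ n) i).1) atTop (𝓝 (q i).1) := fun i =>
    (continuous_fst.tendsto _).comp (hlim' i)
  have hl2 : ∀ i, Tendsto (fun n => (p (φ n) i).2) atTop (𝓝 (q i).2) := fun i =>
    (continuous_snd.tendsto _).comp (hlim' i)
  refine ⟨q, ?_, ?_, ?_⟩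
  · intro i
    exact tail_limit μ hac _ _ (by simpa using (hq i trivial).1) _ (fun n => p (φ n) i)
      (hlim' i) (fun n => (hp (φ n) i).1.2.le)
  · intro y
    by_contra hcon
    push Not at hcon
    have hev : ∀ i, ∀ᶠ n in atTop,
        ⟪y, (p (φ n) i).1⟫_ℝ < (p (φ n) i).2 - 1 / ((φ n : ℝ) + 1) := by
      intro i
      have ht1 : Tendsto (fun n => (p (φ n) i).2 - 1 / ((φ n : ℝ) + 1)) atTop
          (𝓝 ((q i).2 - 0)) := (hl2 i).sub
        (tendsto_one_div_add_atTop_nhds_zero_nat.comp hφ.tendsto_atTop)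
      rw [sub_zero] at ht1
      exact (tendsto_const_nhds.inner (hl1 i)).eventually_lt ht1 (hcon i)
    have hbig : ∀ᶠ n in atTop, ‖y‖ ≤ (φ n : ℝ) :=
      (tendsto_natCast_atTop_atTop.comp hφ.tendsto_atTop).eventually_ge_atTop ‖y‖
    obtain ⟨n, hn1, hn2⟩ := ((eventually_all.2 hev).and hbig).exists
    obtain ⟨i, hi⟩ := hpc (φ n) y hn2
    exact lt_asymm hi (hn1 i)
  · intro x hx i
    refine le_of_tendsto_of_tendsto' (tendsto_const_nhds.inner (hl1 i)) (hl2 i) fun n => ?_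
    exact ((mem_cent_iff μ x).1 hx _ _ (hp (φ n) i).1.1 (hp (φ n) i).1.2).le

lemma touch {d : ℕ} (μ : Measure (EuclideanSpace ℝ (Fin d))) [IsProbabilityMeasure μ]
    (p : Fin (d + 1) → EuclideanSpace ℝ (Fin d) × ℝ)
    (h1 : ∀ i, μ {y | (p i).2 ≤ ⟪y, (p i).1⟫_ℝ} ≤ 1 / ((d : ℝ≥0∞) + 1))
    (h2 : ∀ y, ∃ i, (p i).2 ≤ ⟪y, (p i).1⟫_ℝ)
    (x : EuclideanSpace ℝ (Fin d)) (hx : ∀ i, ⟪x, (p i).1⟫_ℝ ≤ (p i).2) (j : Fin (d + 1)) :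
    ⟪x, (p j).1⟫_ℝ = (p j).2 := by
  classical
  by_contra hne
  have hlt := lt_of_le_of_ne (hx j) hne
  obtain ⟨z, -, hz⟩ := aux_exists μ Set.univ (by simp) (Finset.univ.erase j)
    (fun i => {y | (p i).2 ≤ ⟪y, (p i).1⟫_ℝ})
    (sum_lt_b _ _ (by simp) (fun i _ => h1 i))
  simp only [Set.mem_setOf_eq, not_le, Finset.mem_erase, Finset.mem_univ, and_true] at hz
  have ht : Tendsto (fun t : ℝ => ⟪x + t • (z - x), (p j).1⟫_ℝ) (𝓝[>] 0)
      (𝓝 ⟪x + (0 : ℝ) • (z - x), (p j).1⟫_ℝ) := by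
    apply Tendsto.mono_left _ nhdsWithin_le_nhds
    exact Continuous.tendsto (by fun_prop) 0
  rw [zero_smul, add_zero] at ht
  have hev1 := ht.eventually (gt_mem_nhds hlt)
  have hev2 : ∀ᶠ t : ℝ in 𝓝[>] 0, t ∈ Set.Ioo (0 : ℝ) 1 := Ioo_mem_nhdsGT one_pos
  obtain ⟨t, htj, ht0, ht1⟩ := (hev1.and hev2).exists
  obtain ⟨i, hi⟩ := h2 (x + t • (z - x))
  by_cases hij : i = j
  · subst hij; linarith
  · have h3 := hz i hij
    have h4 := hx i
    rw [inner_add_left, inner_smul_left, inner_sub_left] at hi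
    simp only [conj_trivial] at hi
    nlinarith

lemma unique_pt {d : ℕ} (μ : Measure (EuclideanSpace ℝ (Fin d))) [IsProbabilityMeasure μ]
    (p : Fin (d + 1) → EuclideanSpace ℝ (Fin d) × ℝ)
    (h1 : ∀ i, μ {y | (p i).2 ≤ ⟪y, (p i).1⟫_ℝ} ≤ 1 / ((d : ℝ≥0∞) + 1))
    (h2 : ∀ y, ∃ i, (p i).2 ≤ ⟪y, (p i).1⟫_ℝ)
    (w : EuclideanSpace ℝ (Fin d)) (hw : ∀ i, ⟪w, (p i).1⟫_ℝ = 0) : w = 0 := by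
  by_contra hw0
  obtain ⟨m, rfl⟩ : ∃ m, d = m + 1 := by
    rcases d with _ | m
    · exact absurd (Subsingleton.elim w 0) hw0
    · exact ⟨m, rfl⟩
  haveI : Fact (Module.finrank ℝ (EuclideanSpace ℝ (Fin (m + 1))) = m + 1) :=
    ⟨finrank_euclideanSpace_fin⟩
  have hfr : Module.finrank ℝ (Submodule.span ℝ {w})ᗮ = m :=
    Submodule.finrank_orthogonal_span_singleton hw0
  have key : ∀ i, (p i).1 ∈ (Submodule.span ℝ {w})ᗮ := fun i =>
    Submodule.mem_orthogonal_singleton_iff_inner_right.2 (hw i)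
  let v : Fin (m + 1 + 1) → (Submodule.span ℝ {w})ᗮ := fun i => ⟨(p i).1, key i⟩
  obtain ⟨z, hz⟩ := Convex.helly_theorem' (𝕜 := ℝ) (s := Finset.univ)
    (F := fun i : Fin (m + 1 + 1) => {z : (Submodule.span ℝ {w})ᗮ | ⟪z, v i⟫_ℝ < (p i).2})
    (fun i _ => convex_half_lt _ _)
    (by
      intro I _ hI
      rw [hfr] at hI
      obtain ⟨y, -, hy⟩ := aux_exists μ Set.univ (by simp) I
        (fun i => {y | (p i).2 ≤ ⟪y, (p i).1⟫_ℝ})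
        (sum_lt_b _ _ hI (fun i _ => h1 i))
      refine ⟨(Submodule.span ℝ {w})ᗮ.orthogonalProjection y, ?_⟩
      simp only [Set.mem_iInter]
      intro i hi
      have := hy i hi
      simp only [Set.mem_setOf_eq, not_le] at this ⊢
      rw [Submodule.inner_orthogonalProjection_eq_of_mem_right]
      exact this)
  obtain ⟨i, hi⟩ := h2 z
  have := Set.mem_iInter₂.1 hz i (Finset.mem_univ i)
  simp only [Set.mem_setOf_eq, Submodule.coe_inner, v] at this
  linarith

/-- Structure of the central point set: for an absolutely continuous compactly
supported probability measure on `ℝ^d`, `cent μ` is either a single point or a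
compact convex set with nonempty interior. -/
theorem cent_structure (d : ℕ) (μ : Measure (EuclideanSpace ℝ (Fin d)))
    [IsProbabilityMeasure μ] (hac : μ ≪ volume)
    (K : Set (EuclideanSpace ℝ (Fin d))) (hK : IsCompact K) (hsupp : μ Kᶜ = 0) :
    (∃ x, cent μ = {x}) ∨
      (IsCompact (cent μ) ∧ Convex ℝ (cent μ) ∧ (interior (cent μ)).Nonempty) := by
  obtain ⟨R, hR0, hR⟩ := hK.isBounded.exists_pos_norm_le
  by_cases hint : (interior (cent μ)).Nonempty
  · exact Or.inr ⟨cent_isCompact μ K hsupp R hR0.le hR, cent_convex μ, hint⟩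
  left
  obtain ⟨x, hx⟩ := cent_nonempty μ K hsupp R hR
  obtain ⟨p, h1, h2, h3⟩ := limit_family μ hac K hsupp R hR hint
  refine ⟨x, Set.eq_singleton_iff_unique_mem.2 ⟨hx, fun y hy => ?_⟩⟩
  refine sub_eq_zero.1 (unique_pt μ p h1 h2 (y - x) fun i => ?_)
  rw [inner_sub_left, touch μ p h1 h2 y (h3 y hy) i, touch μ p h1 h2 x (h3 x hx) i, sub_self]
end

section
/- Let P be a topological space with a countable base and let {μ_p}_{p∈P} be a family of probability measures on ℝ^d, each absolutely continuous with respect to Lebesgue measure and 1-convex, depending continuously on p, with all supports contained in a single compact set. Then for every q ∈ P and every ε > 0 there exists a neighborhood U of q such that for all p ∈ U, cent μ_p is contained in the open ε-neighborhood of cent μ_q. -/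
open scoped InnerProductSpace ENNReal
open MeasureTheory

/-- The support of a measure `ν` on `ℝ`: the points all of whose open neighborhoods
have positive measure. -/
def msupport (ν : Measure ℝ) : Set ℝ :=
  {t | ∀ U : Set ℝ, IsOpen U → t ∈ U → 0 < ν U}

/-- A measure `μ` on `ℝ^d` is `1`-convex if for every unit vector `u` the support of
the pushforward of `μ` under `x ↦ ⟪x, u⟫` is connected. -/
def OneConvex {d : ℕ} (μ : Measure (EuclideanSpace ℝ (Fin d))) : Prop :=
  ∀ u : EuclideanSpace ℝ (Fin d), ‖u‖ = 1 →
    IsConnected (msupport (μ.map fun x => ⟪x, u⟫_ℝ))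

/-- Upper semicontinuity of the central point set: for a continuous family of
`1`-convex absolutely continuous probability measures with supports in a single
compact set, near any parameter `q` the central point set is contained in the open
`ε`-neighborhood of the central point set at `q`. -/
theorem cent_upper_semicontinuous (d : ℕ) {P : Type*} [TopologicalSpace P]
    [SecondCountableTopology P]
    (μ : P → Measure (EuclideanSpace ℝ (Fin d)))
    (hprob : ∀ p, IsProbabilityMeasure (μ p))
    (hac : ∀ p, μ p ≪ volume)
    (hconv : ∀ p, OneConvex (μ p))
    (hcont : ∀ U : Set (EuclideanSpace ℝ (Fin d)), IsOpen U →
      Continuous fun p => μ p U)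
    (K : Set (EuclideanSpace ℝ (Fin d))) (hK : IsCompact K)
    (hsupp : ∀ p, μ p Kᶜ = 0)
    (q : P) (ε : ℝ) (hε : 0 < ε) :
    ∃ U ∈ nhds q, ∀ p ∈ U, cent (μ p) ⊆ Metric.thickening ε (cent (μ q)) := by
  obtain ⟨R, hR0, hR⟩ : ∃ R : ℝ, 0 ≤ R ∧ ∀ y ∈ K, ‖y‖ ≤ R := by
    obtain ⟨R, hR⟩ := hK.isBounded.exists_norm_le
    exact ⟨max R 0, le_max_right _ _, fun y hy => (hR y hy).trans (le_max_left _ _)⟩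
  have hpos : (0 : ℝ≥0∞) < 1 / ((d : ℝ≥0∞) + 1) := by
    refine ENNReal.div_pos one_ne_zero ?_
    exact ENNReal.add_ne_top.2 ⟨ENNReal.natCast_ne_top d, ENNReal.one_ne_top⟩
  -- all central points lie in the ball of radius `R`
  have hball : ∀ p, ∀ x ∈ cent (μ p), ‖x‖ ≤ R := by
    intro p x hx
    by_contra! hlt
    have hxpos : 0 < ‖x‖ := lt_of_le_of_lt hR0 hlt
    have hu : ‖(‖x‖⁻¹ : ℝ) • x‖ = 1 := by
      rw [norm_smul, norm_inv, norm_norm, inv_mul_cancel₀ hxpos.ne']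
    have h := hx ((‖x‖⁻¹ : ℝ) • x) ‖x‖ hu (by
      rw [real_inner_smul_right, real_inner_self_eq_norm_sq]
      apply le_of_eq
      field_simp)
    have h0 : μ p {y | ‖x‖ ≤ ⟪y, (‖x‖⁻¹ : ℝ) • x⟫_ℝ} = 0 := by
      refine measure_mono_null ?_ (hsupp p)
      intro y hy hyK
      have h1 := real_inner_le_norm y ((‖x‖⁻¹ : ℝ) • x)
      rw [hu, mul_one] at h1
      have h2 : ‖x‖ ≤ ⟪y, (‖x‖⁻¹ : ℝ) • x⟫_ℝ := hy
      linarith [hR y hyK]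
    rw [h0] at h
    exact absurd h (not_le.2 hpos)
  have hC : IsCompact (Metric.closedBall (0 : EuclideanSpace ℝ (Fin d)) R \
      Metric.thickening ε (cent (μ q))) :=
    (isCompact_closedBall _ _).diff Metric.isOpen_thickening
  have key : ∀ᶠ p in nhds q, ∀ x ∈ Metric.closedBall (0 : EuclideanSpace ℝ (Fin d)) R \
      Metric.thickening ε (cent (μ q)), x ∉ cent (μ p) := by
    refine hC.eventually_forall_of_forall_eventually (P := fun p x => x ∉ cent (μ p)) ?_
    rintro x ⟨-, hx⟩
    have hxc : x ∉ cent (μ q) := fun h => hx (Metric.self_subset_thickening hε _ h)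
    simp only [cent, Set.mem_setOf_eq, not_forall, not_le] at hxc
    obtain ⟨u, c, hu, hc, hlt⟩ := hxc
    have hclosed : ∀ a : ℝ, IsClosed {y : EuclideanSpace ℝ (Fin d) | a ≤ ⟪y, u⟫_ℝ} :=
      fun a => isClosed_le continuous_const (by fun_prop)
    -- lower `c` slightly
    obtain ⟨c', hc', hlt'⟩ : ∃ c' < c, μ q {y | c' ≤ ⟪y, u⟫_ℝ} < 1 / ((d : ℝ≥0∞) + 1) := by
      have hlim := tendsto_measure_iInter_atTop (μ := μ q)
        (s := fun n : ℕ => {y : EuclideanSpace ℝ (Fin d) | c - 1 / ((n : ℝ) + 1) ≤ ⟪y, u⟫_ℝ})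
        (fun n => (hclosed _).measurableSet.nullMeasurableSet)
        (by
          intro m n hmn y hy
          have := Nat.one_div_le_one_div (α := ℝ) hmn
          simp only [Set.mem_setOf_eq] at hy ⊢
          linarith)
        ⟨0, measure_ne_top _ _⟩
      have hinter : (⋂ n : ℕ, {y : EuclideanSpace ℝ (Fin d) |
          c - 1 / ((n : ℝ) + 1) ≤ ⟪y, u⟫_ℝ}) ⊆ {y | c ≤ ⟪y, u⟫_ℝ} := by
        intro y hy
        simp only [Set.mem_iInter, Set.mem_setOf_eq] at hy ⊢
        have ht : Filter.Tendsto (fun n : ℕ => c - 1 / ((n : ℝ) + 1)) Filter.atTop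
            (nhds (c - 0)) := tendsto_const_nhds.sub tendsto_one_div_add_atTop_nhds_zero_nat
        rw [sub_zero] at ht
        exact le_of_tendsto' ht hy
      obtain ⟨n, hn⟩ := (hlim.eventually_lt_const
        (lt_of_le_of_lt (measure_mono hinter) hlt)).exists
      exact ⟨_, sub_lt_self c Nat.one_div_pos_of_nat, hn⟩
    have hHcont : Continuous fun p => μ p {y | c' ≤ ⟪y, u⟫_ℝ} := by
      have heq : (fun p => μ p {y | c' ≤ ⟪y, u⟫_ℝ}) =
          fun p => 1 - μ p {y | c' ≤ ⟪y, u⟫_ℝ}ᶜ := by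
        funext p
        rw [← prob_compl_eq_one_sub (hclosed c').measurableSet.compl, compl_compl]
      rw [heq]
      exact (ENNReal.continuous_sub_left ENNReal.one_ne_top).comp
        (hcont _ (hclosed c').isOpen_compl)
    have h1 : ∀ᶠ p in nhds q, μ p {y | c' ≤ ⟪y, u⟫_ℝ} < 1 / ((d : ℝ≥0∞) + 1) :=
      hHcont.continuousAt.eventually_lt_const hlt'
    have h2 : ∀ᶠ z in nhds x, c' < ⟪z, u⟫_ℝ := by
      have : Continuous fun z : EuclideanSpace ℝ (Fin d) => ⟪z, u⟫_ℝ := by fun_prop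
      exact this.continuousAt.eventually_const_lt (lt_of_lt_of_le hc' hc)
    rw [nhds_prod_eq]
    filter_upwards [h1.prod_mk h2] with z hz hzc
    exact absurd (hzc u c' hu hz.2.le) (not_le.2 hz.1)
  refine ⟨_, key, fun p hp x hx => ?_⟩
  by_contra hxt
  exact hp x ⟨mem_closedBall_zero_iff.2 (hball p x hx), hxt⟩ hx
end

section
/- (Central point theorem) Let μ be a probability measure on ℝ^d, absolutely continuous with respect to Lebesgue measure. Then there exists a point x ∈ ℝ^d such that every closed halfspace H containing x satisfies μ(H) ≥ 1/(d+1). -/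
open scoped InnerProductSpace ENNReal
open MeasureTheory

/-- The central point theorem: for an absolutely continuous probability measure `μ`
on `ℝ^d` there is a point `x` such that every closed halfspace containing `x` has
`μ`-measure at least `1/(d+1)`. -/
theorem central_point (d : ℕ) (μ : Measure (EuclideanSpace ℝ (Fin d)))
    [IsProbabilityMeasure μ] (hac : μ ≪ volume) :
    ∃ x : EuclideanSpace ℝ (Fin d),
      ∀ (u : EuclideanSpace ℝ (Fin d)) (c : ℝ), ‖u‖ = 1 → c ≤ ⟪x, u⟫_ℝ →
        1 / ((d : ℝ≥0∞) + 1) ≤ μ {y | c ≤ ⟪y, u⟫_ℝ} := by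
  let F := {K : Set (EuclideanSpace ℝ (Fin d)) //
    Convex ℝ K ∧ IsCompact K ∧ μ Kᶜ < 1 / ((d : ℝ≥0∞) + 1)}
  have hF : (⋂ K : F, K.1).Nonempty := by
    refine Convex.helly_theorem_compact' (𝕜 := ℝ) (fun K => K.2.1) (fun K => K.2.2.1) ?_
    intro I hI
    rw [finrank_euclideanSpace_fin] at hI
    rw [Set.nonempty_iff_ne_empty]
    intro he
    have hU : (⋃ K ∈ I, (K.1)ᶜ) = Set.univ := by
      rw [← Set.compl_empty, ← he]
      simp only [Set.compl_iInter]
    rcases I.eq_empty_or_nonempty with rfl | hne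
    · simp at he
    have h1 : (1 : ℝ≥0∞) ≤ ∑ K ∈ I, μ (K.1)ᶜ := by
      calc (1 : ℝ≥0∞) = μ (⋃ K ∈ I, (K.1)ᶜ) := by rw [hU, measure_univ]
        _ ≤ _ := measure_biUnion_finset_le _ _
    have h2 : ∑ K ∈ I, μ (K.1)ᶜ < ∑ K ∈ I, 1 / ((d : ℝ≥0∞) + 1) :=
      ENNReal.sum_lt_sum_of_nonempty hne (fun K _ => K.2.2.2)
    have h3 : ∑ K ∈ I, 1 / ((d : ℝ≥0∞) + 1) ≤ 1 := by
      rw [Finset.sum_const, nsmul_eq_mul, mul_one_div]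
      apply ENNReal.div_le_of_le_mul
      rw [one_mul]
      exact_mod_cast hI
    exact absurd (h1.trans_lt (h2.trans_le h3)) (lt_irrefl _)
  obtain ⟨x, hx⟩ := hF
  refine ⟨x, fun u c _ hc => ?_⟩
  by_contra! hlt
  let K : ℕ → Set (EuclideanSpace ℝ (Fin d)) := fun n =>
    Metric.closedBall 0 (n : ℝ) ∩ {y | ⟪y, u⟫_ℝ ≤ c - 1 / ((n : ℝ) + 1)}
  have hcl : ∀ n, IsClosed {y : EuclideanSpace ℝ (Fin d) | ⟪y, u⟫_ℝ ≤ c - 1 / ((n : ℝ) + 1)} :=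
    fun n => isClosed_le (by fun_prop) continuous_const
  have hKc : ∀ n, IsCompact (K n) := fun n => (isCompact_closedBall _ _).inter_right (hcl n)
  have hKconv : ∀ n, Convex ℝ (K n) := fun n => (convex_closedBall _ _).inter
    (convex_halfSpace_le ⟨fun a b => inner_add_left _ _ _,
      fun a b => by simp [real_inner_smul_left]⟩ _)
  have hmono : Monotone K := by
    intro m n hmn y hy
    have hmn' : (m : ℝ) ≤ n := by exact_mod_cast hmn
    refine ⟨Metric.closedBall_subset_closedBall hmn' hy.1, ?_⟩
    have h := hy.2
    simp only [Set.mem_setOf_eq] at h ⊢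
    have := Nat.one_div_le_one_div (α := ℝ) hmn
    linarith
  have hInter : (⋂ n, (K n)ᶜ) = {y | c ≤ ⟪y, u⟫_ℝ} := by
    ext y
    simp only [Set.mem_iInter, Set.mem_compl_iff, Set.mem_setOf_eq]
    constructor
    · intro h
      by_contra! hy
      obtain ⟨n, hn⟩ := exists_nat_one_div_lt (sub_pos.2 hy)
      obtain ⟨m, hm⟩ := exists_nat_ge ‖y‖
      apply h (max n m)
      have h4 := Nat.one_div_le_one_div (α := ℝ) (le_max_left n m)
      have h5 : (m : ℝ) ≤ (max n m : ℕ) := by exact_mod_cast le_max_right n m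
      refine ⟨by simpa only [mem_closedBall_zero_iff] using hm.trans h5, ?_⟩
      simp only [Set.mem_setOf_eq]
      linarith
    · intro h n hn
      have h6 := hn.2
      simp only [Set.mem_setOf_eq] at h6
      have : (0 : ℝ) < 1 / ((n : ℝ) + 1) := by positivity
      linarith
  have ht := tendsto_measure_iInter_atTop (μ := μ) (s := fun n => (K n)ᶜ)
    (fun n => (hKc n).measurableSet.compl.nullMeasurableSet)
    (fun m n h => Set.compl_subset_compl.2 (hmono h)) ⟨0, measure_ne_top _ _⟩
  rw [hInter] at ht
  obtain ⟨n, hn⟩ := (ht.eventually (gt_mem_nhds hlt)).exists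
  have hxK : x ∈ K n := Set.mem_iInter.1 hx ⟨K n, hKconv n, hKc n, hn⟩
  have : x ∈ ⋂ n, (K n)ᶜ := by rw [hInter]; exact hc
  exact Set.mem_iInter.1 this n hxK
end

section
/- (Discrete central point theorem) Let X ⊂ ℝ^d be a finite set with |X| = n. Then there exists a point x ∈ ℝ^d such that every closed halfspace H containing x satisfies |H ∩ X| ≥ ⌊(n+d)/(d+1)⌋. -/
open scoped InnerProductSpace

/-- The discrete central point theorem: for a finite set `X ⊂ ℝ^d` of `n` points
there is a point `x` such that every closed halfspace containing `x` contains at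
least `⌊(n+d)/(d+1)⌋` points of `X`. -/
theorem discrete_central_point (d n : ℕ) (X : Finset (EuclideanSpace ℝ (Fin d)))
    (hX : X.card = n) :
    ∃ x : EuclideanSpace ℝ (Fin d),
      ∀ (u : EuclideanSpace ℝ (Fin d)) (c : ℝ), ‖u‖ = 1 → c ≤ ⟪x, u⟫_ℝ →
        (n + d) / (d + 1) ≤ {y ∈ (X : Set (EuclideanSpace ℝ (Fin d))) | c ≤ ⟪y, u⟫_ℝ}.ncard := by
  classical
  rcases Nat.eq_zero_or_pos n with h0 | hn
  · refine ⟨0, fun u c _ _ => ?_⟩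
    have : (n + d) / (d + 1) = 0 := Nat.div_eq_of_lt (by omega)
    omega
  obtain ⟨k, hk⟩ : ∃ k, k = (n + d) / (d + 1) := ⟨_, rfl⟩
  rw [← hk]
  have hmul : k * (d + 1) ≤ n + d := by rw [hk]; exact Nat.div_mul_le_self _ _
  have hk1 : 1 ≤ k := by
    rw [hk]; exact (Nat.one_le_div_iff (by omega)).2 (by omega)
  obtain ⟨m, rfl⟩ : ∃ m, k = m + 1 := ⟨k - 1, by omega⟩
  have hm : (d + 1) * m < n := by nlinarith
  obtain ⟨x, hx⟩ := Convex.helly_theorem' (𝕜 := ℝ)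
    (F := fun Y : Finset (EuclideanSpace ℝ (Fin d)) => convexHull ℝ (Y : Set (EuclideanSpace ℝ (Fin d))))
    (s := X.powerset.filter (fun Y => (X \ Y).card ≤ m))
    (fun _ _ => convex_convexHull ℝ _) (by
      intro I hI hcard
      rw [finrank_euclideanSpace_fin] at hcard
      have h1 : (I.biUnion (fun Y => X \ Y)).card ≤ I.card * m :=
        Finset.card_biUnion_le_card_mul _ _ _
          (fun Y hY => (Finset.mem_filter.1 (hI hY)).2)
      have h2 : I.card * m ≤ (d + 1) * m := Nat.mul_le_mul_right _ hcard
      obtain ⟨p, hpX, hp⟩ := Finset.exists_mem_notMem_of_card_lt_card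
        (s := I.biUnion (fun Y => X \ Y)) (t := X) (by omega)
      refine ⟨p, Set.mem_iInter₂.2 fun Y hY => subset_convexHull ℝ (Y : Set (EuclideanSpace ℝ (Fin d))) ?_⟩
      by_contra hpY
      exact hp (Finset.mem_biUnion.2 ⟨Y, hY, Finset.mem_sdiff.2 ⟨hpX, hpY⟩⟩))
  refine ⟨x, fun u c _ hc => ?_⟩
  by_contra! hlt
  have hset : {y ∈ (X : Set (EuclideanSpace ℝ (Fin d))) | c ≤ ⟪y, u⟫_ℝ}
      = ((X.filter (fun y => c ≤ ⟪y, u⟫_ℝ) : Finset (EuclideanSpace ℝ (Fin d))) :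
        Set (EuclideanSpace ℝ (Fin d))) := by
    ext y; simp
  rw [hset, Set.ncard_coe_finset] at hlt
  have hsd : X \ X.filter (fun y => ¬ c ≤ ⟪y, u⟫_ℝ) = X.filter (fun y => c ≤ ⟪y, u⟫_ℝ) := by
    ext y; simp only [Finset.mem_sdiff, Finset.mem_filter]; tauto
  have hxY := Set.mem_iInter₂.1 hx (X.filter (fun y => ¬ c ≤ ⟪y, u⟫_ℝ)) (by
    rw [Finset.mem_filter, Finset.mem_powerset, hsd]
    exact ⟨Finset.filter_subset _ _, by omega⟩)
  have hconv : Convex ℝ {y : EuclideanSpace ℝ (Fin d) | ⟪y, u⟫_ℝ < c} :=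
    convex_halfSpace_lt
      ⟨fun a b => inner_add_left a b u, fun r a => by simp [inner_smul_left]⟩ c
  have hsub := convexHull_min (s := ((X.filter (fun y => ¬ c ≤ ⟪y, u⟫_ℝ) : Finset (EuclideanSpace ℝ (Fin d))) :
        Set (EuclideanSpace ℝ (Fin d))))
    (t := {y : EuclideanSpace ℝ (Fin d) | ⟪y, u⟫_ℝ < c})
    (fun y hy => by
      have h := (Finset.mem_filter.1 (Finset.mem_coe.1 hy)).2
      exact lt_of_not_ge h) hconv
  exact absurd hc (not_le.2 (hsub hxY))
end

section
/- (Tverberg's theorem) Let n ≥ 1 and let X ⊂ ℝ^d be a set of (d+1)(n−1)+1 points. Then X can be partitioned into n pairwise disjoint subsets X_1, …, X_n whose convex hulls have a common point: ⋂_{i=1}^n conv X_i ≠ ∅. -/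
/-- Weights witnessing membership in the convex hull of a finite family. -/
theorem exists_weights_of_mem_convexHull_range {V : Type*} [AddCommGroup V] [Module ℝ V]
    {ι : Type*} [Fintype ι] (y : ι → V) (p : V) (hp : p ∈ convexHull ℝ (Set.range y)) :
    ∃ w : ι → ℝ, (∀ i, 0 ≤ w i) ∧ ∑ i, w i = 1 ∧ ∑ i, w i • y i = p := by
  classical
  rw [convexHull_range_eq_exists_affineCombination] at hp
  obtain ⟨s, w, hw0, hw1, hw⟩ := hp
  rw [Finset.affineCombination_eq_linear_combination _ _ _ hw1] at hw
  refine ⟨fun i => if i ∈ s then w i else 0, fun i => ?_, ?_, ?_⟩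
  · by_cases h : i ∈ s
    · simpa [h] using hw0 i h
    · simp [h]
  · simpa using hw1
  · simpa [ite_smul] using hw

/-- Colorful Carathéodory theorem (Bárány). -/
theorem colorful_caratheodory {V : Type*} [NormedAddCommGroup V] [InnerProductSpace ℝ V]
    [FiniteDimensional ℝ V] {ι κ : Type*} [Fintype ι] [Fintype κ] [Nonempty κ]
    (hcard : Module.finrank ℝ V < Fintype.card ι) (φ : ι → κ → V)
    (h0 : ∀ i, (0 : V) ∈ convexHull ℝ (Set.range (φ i))) :
    ∃ c : ι → κ, (0 : V) ∈ convexHull ℝ (Set.range fun i => φ i (c i)) := by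
  classical
  have hι : Nonempty ι := Fintype.card_pos_iff.mp (by omega)
  obtain ⟨p, hpS, hmin⟩ : ∃ p ∈ ⋃ c : ι → κ, convexHull ℝ (Set.range fun i => φ i (c i)),
      ∀ q ∈ ⋃ c : ι → κ, convexHull ℝ (Set.range fun i => φ i (c i)), ‖p‖ ≤ ‖q‖ := by
    have hc : IsCompact (⋃ c : ι → κ, convexHull ℝ (Set.range fun i => φ i (c i))) :=
      isCompact_iUnion fun c => (Set.finite_range _).isCompact_convexHull (𝕜 := ℝ)
    have hne : (⋃ c : ι → κ, convexHull ℝ (Set.range fun i => φ i (c i))).Nonempty := by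
      obtain ⟨k⟩ := ‹Nonempty κ›
      obtain ⟨i⟩ := hι
      exact ⟨φ i k, Set.mem_iUnion.mpr ⟨fun _ => k, subset_convexHull ℝ _ ⟨i, rfl⟩⟩⟩
    obtain ⟨p, hp, h⟩ := hc.exists_isMinOn hne continuous_norm.continuousOn
    exact ⟨p, hp, fun q hq => h hq⟩
  have key : ∀ c : ι → κ, p ∈ convexHull ℝ (Set.range fun i => φ i (c i)) →
      ∀ i, inner ℝ p p ≤ inner ℝ p (φ i (c i)) := by
    intro c hp i
    by_contra hlt
    push Not at hlt
    set q := φ i (c i)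
    have hq : q ∈ convexHull ℝ (Set.range fun i => φ i (c i)) :=
      subset_convexHull ℝ _ ⟨i, rfl⟩
    have hline : ∀ t : ℝ, 0 ≤ t → t ≤ 1 →
        0 ≤ 2 * t * (inner ℝ p q - inner ℝ p p) + t ^ 2 * ‖q - p‖ ^ 2 := by
      intro t ht0 ht1
      have hm : p + t • (q - p) ∈ convexHull ℝ (Set.range fun i => φ i (c i)) :=
        (convex_convexHull ℝ _).add_smul_sub_mem hp hq ⟨ht0, ht1⟩
      have h1 := hmin _ (Set.mem_iUnion.mpr ⟨c, hm⟩)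
      have h2 : ‖p‖ ^ 2 ≤ ‖p + t • (q - p)‖ ^ 2 := by gcongr
      rw [norm_add_sq_real, norm_smul, inner_smul_right, inner_sub_right, mul_pow,
        Real.norm_eq_abs, sq_abs] at h2
      linarith
    set D := inner ℝ p p - inner ℝ p q with hD
    have hDpos : 0 < D := by simp only [hD]; linarith
    set B := ‖q - p‖ ^ 2
    have hB : 0 ≤ B := by positivity
    have h := hline (D / (D + B)) (by positivity) (by rw [div_le_one (by positivity)]; linarith)
    have e : inner ℝ p q - inner ℝ p p = -D := by simp only [hD]; ring
    rw [e] at h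
    have e2 : 2 * (D / (D + B)) * -D + (D / (D + B)) ^ 2 * B
        = - (D ^ 2 * (2 * D + B)) / (D + B) ^ 2 := by
      field_simp; ring
    rw [e2] at h
    have : 0 < (D ^ 2 * (2 * D + B)) / (D + B) ^ 2 := by positivity
    rw [neg_div] at h
    linarith
  obtain ⟨c, hc⟩ := Set.mem_iUnion.mp hpS
  by_cases hp0 : p = 0
  · exact ⟨c, hp0 ▸ hc⟩
  exfalso
  have hpp : 0 < inner ℝ p p := by
    rw [real_inner_self_eq_norm_sq]; have := norm_pos_iff.mpr hp0; positivity
  -- weights with a vanishing entry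
  obtain ⟨w, hw0, hw1, hwp, i₀, hi₀⟩ : ∃ w : ι → ℝ, (∀ i, 0 ≤ w i) ∧ ∑ i, w i = 1 ∧
      ∑ i, w i • φ i (c i) = p ∧ ∃ i₀, w i₀ = 0 := by
    obtain ⟨w, hw0, hw1, hwp⟩ : ∃ w : ι → ℝ, (∀ i, 0 ≤ w i) ∧ ∑ i, w i = 1 ∧
      ∑ i, w i • φ i (c i) = p := by
      exact exists_weights_of_mem_convexHull_range _ _ hc
    by_cases hz : ∃ i₀, w i₀ = 0
    · exact ⟨w, hw0, hw1, hwp, hz⟩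
    push Not at hz
    have hwpos : ∀ i, 0 < w i := fun i => lt_of_le_of_ne (hw0 i) (hz i).symm
    have heq : ∀ i, inner ℝ p (φ i (c i)) = inner ℝ p p := by
      have hs : ∑ i, w i * (inner ℝ p (φ i (c i)) - inner ℝ p p) = 0 := by
        simp only [mul_sub, Finset.sum_sub_distrib, ← Finset.sum_mul, hw1, one_mul]
        simp only [← inner_smul_right, ← inner_sum, hwp, sub_self]
      rw [Finset.sum_eq_zero_iff_of_nonneg
        (fun i _ => mul_nonneg (hw0 i) (sub_nonneg.mpr (key c hc i)))] at hs
      intro i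
      have := hs i (Finset.mem_univ i)
      rcases mul_eq_zero.mp this with h | h
      · exact absurd h (hz i)
      · linarith
    have hdep : ¬ LinearIndependent ℝ (fun i => φ i (c i)) := fun h =>
      absurd h.fintype_card_le_finrank (by omega)
    obtain ⟨g, hg, hgne⟩ := Fintype.not_linearIndependent_iff.mp hdep
    have hgs : ∑ i, g i = 0 := by
      have : inner ℝ p (∑ i, g i • φ i (c i)) = 0 := by rw [hg, inner_zero_right]
      simp only [inner_sum, inner_smul_right, heq, ← Finset.sum_mul] at this
      exact (mul_eq_zero.mp this).resolve_right hpp.ne'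
    obtain ⟨i₁, -, hi₁⟩ := Finset.exists_pos_of_sum_zero_of_exists_nonzero g hgs
      (by obtain ⟨i, hi⟩ := hgne; exact ⟨i, Finset.mem_univ i, hi⟩)
    obtain ⟨i₀, hi₀, hmin₀⟩ := Finset.exists_min_image (Finset.univ.filter fun i => 0 < g i)
      (fun i => w i / g i) ⟨i₁, by simp [hi₁]⟩
    have hgi₀ : 0 < g i₀ := by simpa using hi₀
    refine ⟨fun i => w i - w i₀ / g i₀ * g i, ?_, ?_, ?_, i₀, ?_⟩
    · intro i
      by_cases hgi : 0 < g i
      · have := hmin₀ i (by simp [hgi])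
        rw [le_div_iff₀ hgi] at this
        simpa using this
      · push Not at hgi
        have h1 : 0 ≤ w i₀ / g i₀ := div_nonneg (hw0 _) hgi₀.le
        have := mul_nonpos_of_nonneg_of_nonpos h1 hgi
        have := hw0 i
        simp only
        linarith
    · rw [Finset.sum_sub_distrib, ← Finset.mul_sum, hgs, hw1]; simp
    · simp only [sub_smul, mul_smul, Finset.sum_sub_distrib, ← Finset.smul_sum, hg, hwp]; simp
    · simp [hgi₀.ne']
  obtain ⟨j, hj⟩ : ∃ j, inner ℝ p (φ i₀ j) ≤ 0 := by
    by_contra hcon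
    push Not at hcon
    have hconv : Convex ℝ {x : V | 0 < inner ℝ p x} :=
      convex_halfSpace_gt (innerₗ V p).isLinear 0
    have := convexHull_min (by rintro _ ⟨j, rfl⟩; exact hcon j) hconv (h0 i₀)
    simp at this
  have hmem : p ∈ convexHull ℝ (Set.range fun i => φ i (Function.update c i₀ j i)) := by
    rw [← hwp]
    have : ∑ i, w i • φ i (c i) = ∑ i, w i • φ i (Function.update c i₀ j i) := by
      refine Finset.sum_congr rfl fun i _ => ?_
      by_cases h : i = i₀
      · subst h; simp [hi₀]
      · rw [Function.update_of_ne h]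
    rw [this]
    exact (convex_convexHull ℝ _).sum_mem (fun i _ => hw0 i) hw1
      (fun i _ => subset_convexHull ℝ _ ⟨i, rfl⟩)
  have := key _ hmem i₀
  rw [Function.update_self] at this
  linarith

/-- Tverberg's theorem: a set of `(d+1)(n-1)+1` points in `ℝ^d` can be partitioned
into `n` pairwise disjoint subsets whose convex hulls have a common point.
The partition is encoded by a labeling function `c`; the parts are its fibers in `X`. -/
theorem tverberg (d n : ℕ) (hn : 1 ≤ n) (X : Finset (EuclideanSpace ℝ (Fin d)))
    (hX : X.card = (d + 1) * (n - 1) + 1) :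
    ∃ c : EuclideanSpace ℝ (Fin d) → Fin n,
      ∃ p : EuclideanSpace ℝ (Fin d), ∀ i : Fin n,
        p ∈ convexHull ℝ {x | x ∈ X ∧ c x = i} := by
  classical
  obtain ⟨m, rfl⟩ : ∃ m, n = m + 1 := ⟨n - 1, by omega⟩
  simp only [Nat.add_sub_cancel] at hX
  let v : Fin (m + 1) → Fin m → ℝ := fun i k => if i = 0 then -1 else if i = k.succ then 1 else 0
  let φ : X → Fin (m + 1) → EuclideanSpace ℝ (Fin m × Option (Fin d)) := fun x i =>
    WithLp.toLp 2 fun ko => v i ko.1 * ko.2.elim 1 (fun a => x.1 a)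
  have hv : ∀ k, ∑ i, v i k = 0 := by
    intro k
    rw [Fin.sum_univ_succ]
    simp [v, Fin.succ_ne_zero]
  obtain ⟨c, hc⟩ := colorful_caratheodory (φ := φ)
    (by simp [hX]; rw [mul_comm]) (by
      intro x
      have : (0 : EuclideanSpace ℝ (Fin m × Option (Fin d))) =
          ∑ i : Fin (m + 1), (1 / ((m : ℝ) + 1)) • φ x i := by
        rw [← Finset.smul_sum]
        have : ∑ i, φ x i = 0 := by
          ext ko
          simp [φ, ← Finset.sum_mul, hv]
        rw [this, smul_zero]
      rw [this]
      refine (convex_convexHull ℝ _).sum_mem (fun i _ => by positivity) ?_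
        (fun i _ => subset_convexHull ℝ _ ⟨i, rfl⟩)
      simp
      field_simp)
  obtain ⟨w, hw0, hw1, hw⟩ := exists_weights_of_mem_convexHull_range _ _ hc
  have hcoord : ∀ (k : Fin m) (f : X → ℝ), (∑ x, w x * (v (c x) k * f x) = 0) →
      ∑ x with c x = k.succ, w x * f x = ∑ x with c x = 0, w x * f x := by
    intro k f h
    rw [← sub_eq_zero, ← h, Finset.sum_filter, Finset.sum_filter, ← Finset.sum_sub_distrib]
    refine Finset.sum_congr rfl fun x _ => ?_
    by_cases h0 : c x = 0
    · simp [v, h0, (Fin.succ_ne_zero _).symm]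
    · by_cases h1 : c x = k.succ <;> simp [v, h0, h1, Fin.succ_ne_zero]
  have hc1 : ∀ i, ∑ x with c x = i, w x = ∑ x with c x = 0, w x := by
    intro i
    induction i using Fin.cases with
    | zero => rfl
    | succ k =>
      have h := congrArg (fun z => z (k, none)) hw
      have := hcoord k (fun _ => 1) (by simpa [φ] using h)
      simpa using this
  have hc2 : ∀ i, ∑ x with c x = i, w x • x.1 = ∑ x with c x = 0, w x • x.1 := by
    intro i
    induction i using Fin.cases with
    | zero => rfl
    | succ k =>
      ext a
      have h := congrArg (fun z => z (k, some a)) hw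
      have := hcoord k (fun x => x.1 a) (by simpa [φ] using h)
      simpa using this
  set s := ∑ x with c x = 0, w x with hs
  have hspos : 0 < s := by
    have h : ∑ i, ∑ x with c x = i, w x = 1 := by
      rw [Finset.sum_fiberwise, hw1]
    simp only [hc1] at h
    simp at h
    by_contra hneg
    push Not at hneg
    have : ((m : ℝ) + 1) * s ≤ 0 := mul_nonpos_of_nonneg_of_nonpos (by positivity) hneg
    linarith
  refine ⟨fun x => if h : x ∈ X then c ⟨x, h⟩ else 0,
    s⁻¹ • ∑ x with c x = 0, w x • x.1, fun i => ?_⟩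
  rw [← hc2 i, Finset.smul_sum]
  simp only [smul_smul]
  refine (convex_convexHull ℝ _).sum_mem
    (fun x _ => mul_nonneg (inv_nonneg.mpr hspos.le) (hw0 x)) ?_ ?_
  · rw [← Finset.mul_sum, hc1 i, inv_mul_cancel₀ hspos.ne']
  · intro x hx
    refine subset_convexHull ℝ _ ⟨x.2, ?_⟩
    simpa using hx
end
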